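/- arXiv:2508.08870 — 2 statements merged into one kernel-verified Lean document; each statement's English description precedes it below -/
import Mathlib

section
/- For every integer d ≥ 2 and every finite set P of n points in ℝ^d whose affine span is all of ℝ^d (i.e., P is not contained in any affine hyperplane), P determines at least (1/48)·d·n lines with pairwise distinct directions; that is, there exist at least ⌈dn/48⌉ pairs (p_i, q_i) of distinct points of P such that the difference vectors q_i − p_i are pairwise non-parallel (no one is a real scalar multiple of another). -/
namespace DirBound

section Rank
variable {ι : Type*} [Fintype ι]

open Classical in
/-- number of indices strictly below `i` -/
noncomputable def rk (f : ι → ℝ) (i : ι) : ℕ := (Finset.univ.filter (fun j => f j < f i)).card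

open Classical in
/-- size of the level class of `i` -/
noncomputable def sz (g : ι → ℝ) (i : ι) : ℕ := (Finset.univ.filter (fun j => g j = g i)).card

lemma rk_lt (f : ι → ℝ) (i : ι) : rk f i < Fintype.card ι := by
  classical
  unfold rk
  rw [← Finset.card_univ]
  apply Finset.card_lt_card
  rw [Finset.ssubset_univ_iff]
  intro h
  have := Finset.mem_univ i
  rw [← h] at this
  simp at this

lemma rk_strict (f : ι → ℝ) {i j : ι} (h : f i < f j) : rk f i < rk f j := by
  classical
  unfold rk
  apply Finset.card_lt_card
  rw [Finset.ssubset_iff_of_subset]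
  · exact ⟨i, by simp [h], by simp⟩
  · intro l hl
    simp at hl ⊢
    linarith

lemma rk_inj {f : ι → ℝ} (hf : Function.Injective f) : Function.Injective (rk f) := by
  intro i j hij
  by_contra hne
  rcases lt_or_gt_of_ne (fun h => hne (hf h)) with h | h
  · have := rk_strict f h; omega
  · have := rk_strict f h; omega

lemma rk_surj {f : ι → ℝ} (hf : Function.Injective f) {r : ℕ} (hr : r < Fintype.card ι) :
    ∃ i, rk f i = r := by
  classical
  have hinj : Function.Injective (fun i => (⟨rk f i, rk_lt f i⟩ : Fin (Fintype.card ι))) := by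
    intro i j h
    exact rk_inj hf (by simpa using h)
  have hb := (Fintype.bijective_iff_injective_and_card _).2 ⟨hinj, by simp⟩
  obtain ⟨i, hi⟩ := hb.2 ⟨r, hr⟩
  exact ⟨i, by simpa using hi⟩

/-- `f` refines `g`. -/
def Refines (f g : ι → ℝ) : Prop := ∀ i j, g i < g j → f i < f j

lemma rk_ge {f g : ι → ℝ} (h : Refines f g) (i : ι) : rk g i ≤ rk f i := by
  classical
  unfold rk
  apply Finset.card_le_card
  intro j hj
  simp at hj ⊢
  exact h _ _ hj

lemma rk_lt_add {f g : ι → ℝ} (h : Refines f g) (i : ι) : rk f i < rk g i + sz g i := by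
  classical
  unfold rk sz
  rw [← Finset.card_union_of_disjoint]
  · apply Finset.card_lt_card
    rw [Finset.ssubset_iff_of_subset]
    · exact ⟨i, by simp, by simp⟩
    · intro l hl
      simp at hl ⊢
      by_contra hc
      push Not at hc
      have : g i < g l := lt_of_le_of_ne hc.1 (Ne.symm hc.2)
      have := h _ _ this
      linarith
  · rw [Finset.disjoint_filter]
    intro l _ h1 h2
    linarith

lemma rk_add_sz_le (g : ι → ℝ) {i j : ι} (h : g i < g j) : rk g i + sz g i ≤ rk g j := by
  classical
  unfold rk sz
  rw [← Finset.card_union_of_disjoint]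
  · apply Finset.card_le_card
    intro l hl
    simp at hl ⊢
    rcases hl with h1 | h1 <;> linarith
  · rw [Finset.disjoint_filter]
    intro l _ h1 h2
    linarith

lemma same_class {f g : ι → ℝ} (h : Refines f g) {i j : ι} (h1 : rk g i ≤ rk f j)
    (h2 : rk f j < rk g i + sz g i) : g j = g i := by
  rcases lt_trichotomy (g j) (g i) with hl | hl | hl
  · have := rk_lt_add h j
    have := rk_add_sz_le g hl
    omega
  · exact hl
  · have := rk_ge h j
    have := rk_add_sz_le g hl
    omega

lemma rk_congr (g : ι → ℝ) {i j : ι} (h : g i = g j) : rk g i = rk g j ∧ sz g i = sz g j := by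
  unfold rk sz
  simp [h]

lemma rk_add_sz_card (g : ι → ℝ) (i : ι) : rk g i + sz g i ≤ Fintype.card ι := by
  classical
  unfold rk sz
  rw [← Finset.card_union_of_disjoint, ← Finset.card_univ]
  · exact Finset.card_le_card (Finset.subset_univ _)
  · rw [Finset.disjoint_filter]
    intro l _ h1 h2
    linarith

open Classical in
/-- One-event step of the barrier argument. -/
lemma step {f f' g : ι → ℝ} (hf : Function.Injective f) (hf' : Function.Injective f')
    (h : Refines f g) (h' : Refines f' g) (k H : ℕ) (hk : 2 * k ≤ Fintype.card ι)
    (hH : ∀ i, sz g i ≤ 2 * H + 1)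
    (met met' : ι → ι → Prop)
    (hmm : ∀ i j, met i j → met' i j)
    (hg : ∀ i j, i ≠ j → g i = g j → met' i j)
    (hng : ∀ i j, i ≠ j → g i = g j → ¬ met i j)
    (F : Finset ι) (m : ℕ)
    (IH : ∃ w, w ≤ H ∧ w ≤ k ∧ (F.filter (fun i => k ≤ rk f i)).card ≤ m + w ∧
      ∀ i j, i ≠ j → k ≤ rk f i + w → rk f i < k + w → k ≤ rk f j + w → rk f j < k + w → met i j) :
    ∃ w, w ≤ H ∧ w ≤ k ∧ (F.filter (fun i => k ≤ rk f' i)).card ≤ m + 1 + w ∧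
      ∀ i j, i ≠ j → k ≤ rk f' i + w → rk f' i < k + w → k ≤ rk f' j + w → rk f' j < k + w →
        met' i j := by
  obtain ⟨w, hwH, hwk, hc, hmet⟩ := IH
  rcases Nat.eq_zero_or_pos w with hw | hw
  · subst hw
    by_cases hcross : ∃ i, rk f i < k ∧ k ≤ rk f' i
    · obtain ⟨i0, hi1, hi2⟩ := hcross
      have a1 := rk_ge h i0
      have a2 := rk_lt_add h' i0
      have a3 := rk_add_sz_card g i0
      have a4 := hH i0
      set lo := rk g i0 with hlo
      set s := sz g i0 with hs
      obtain ⟨q, hq⟩ := rk_surj hf (r := k) (by omega)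
      have hqc : g q = g i0 := same_class h (by omega) (by omega)
      set d := min (k - lo) (lo + s - k) with hd
      refine ⟨d, by omega, by omega, ?_, ?_⟩
      · -- crossing set
        have hsub : F.filter (fun i => k ≤ rk f' i) ⊆ F.filter (fun i => k ≤ rk f i) ∪
            Finset.univ.filter (fun i => rk f i < k ∧ k ≤ rk f' i) := by
          intro i hi
          simp at hi ⊢
          by_cases hh : k ≤ rk f i
          · left; exact ⟨hi.1, hh⟩
          · right; exact ⟨by omega, hi.2⟩
        have hcls : ∀ i, rk f i < k → k ≤ rk f' i → g i = g i0 := by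
          intro i h1 h2
          have b1 := rk_ge h i
          have b2 := rk_lt_add h' i
          have : g q = g i := same_class h (by omega) (by omega)
          rw [← this, hqc]
        have hd1 : (Finset.univ.filter (fun i => rk f i < k ∧ k ≤ rk f' i)).card ≤ k - lo := by
          have : (Finset.univ.filter (fun i => rk f i < k ∧ k ≤ rk f' i)).card
              ≤ (Finset.Ico lo k).card := by
            apply Finset.card_le_card_of_injOn (rk f)
            · intro i hi
              simp at hi ⊢
              have e := rk_congr g (hcls i hi.1 hi.2)
              have := rk_ge h i
              omega
            · exact (rk_inj hf).injOn
          simpa using this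
        have hd2 : (Finset.univ.filter (fun i => rk f i < k ∧ k ≤ rk f' i)).card ≤ lo + s - k := by
          have : (Finset.univ.filter (fun i => rk f i < k ∧ k ≤ rk f' i)).card
              ≤ (Finset.Ico k (lo + s)).card := by
            apply Finset.card_le_card_of_injOn (rk f')
            · intro i hi
              simp at hi ⊢
              have e := rk_congr g (hcls i hi.1 hi.2)
              have := rk_lt_add h' i
              omega
            · exact (rk_inj hf').injOn
          simpa using this
        have := Finset.card_le_card hsub
        have := this.trans (Finset.card_union_le _ _)
        omega
      · intro i j hij b1 b2 b3 b4
        apply hg i j hij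
        have e1 : g i = g i0 := same_class h' (by omega) (by omega)
        have e2 : g j = g i0 := same_class h' (by omega) (by omega)
        rw [e1, e2]
    · push Not at hcross
      refine ⟨0, by omega, by omega, ?_, ?_⟩
      · have : F.filter (fun i => k ≤ rk f' i) ⊆ F.filter (fun i => k ≤ rk f i) := by
          intro i hi
          simp at hi ⊢
          refine ⟨hi.1, ?_⟩
          by_contra hh
          have := hcross i (by omega)
          omega
        have := Finset.card_le_card this
        omega
      · intro i j hij b1 b2 b3 b4
        omega
  · -- two adjacent central ranks cannot be in a common class
    have key : ∀ i r, k ≤ r + w → r + 1 < k + w → rk g i ≤ r → r + 1 < rk g i + sz g i → False := by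
      intro i r b1 b2 b3 b4
      obtain ⟨p, hp⟩ := rk_surj hf (r := r) (by omega)
      obtain ⟨q, hq⟩ := rk_surj hf (r := r + 1) (by omega)
      have e1 : g p = g i := same_class h (by omega) (by omega)
      have e2 : g q = g i := same_class h (by omega) (by omega)
      have hne : p ≠ q := by rintro rfl; omega
      exact hng p q hne (by rw [e1, e2]) (hmet p q hne (by omega) (by omega) (by omega) (by omega))
    refine ⟨w - 1, by omega, by omega, ?_, ?_⟩
    · have : F.filter (fun i => k ≤ rk f' i) ⊆ F.filter (fun i => k ≤ rk f i) := by
        intro i hi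
        simp at hi ⊢
        refine ⟨hi.1, ?_⟩
        by_contra hh
        have a1 := rk_ge h i
        have a2 := rk_lt_add h' i
        exact key i (k - 1) (by omega) (by omega) (by omega) (by omega)
      have := Finset.card_le_card this
      omega
    · have sing : ∀ i, k ≤ rk f' i + (w - 1) → rk f' i < k + (w - 1) → rk f i = rk f' i := by
        intro i b1 b2
        have a1 := rk_ge h i
        have a2 := rk_lt_add h i
        have a3 := rk_ge h' i
        have a4 := rk_lt_add h' i
        by_contra hne
        rcases lt_or_gt_of_ne hne with hl | hl
        · exact key i (rk f' i - 1) (by omega) (by omega) (by omega) (by omega)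
        · exact key i (rk f' i) (by omega) (by omega) (by omega) (by omega)
      intro i j hij b1 b2 b3 b4
      have e1 := sing i b1 b2
      have e2 := sing j b3 b4
      exact hmm _ _ (hmet i j hij (by omega) (by omega) (by omega) (by omega))

end Rank

section Kinetic
variable {ι : Type*}

/-- collision time -/
noncomputable def ct (α β : ι → ℝ) (i j : ι) : ℝ := (β i - β j) / (α i - α j)

lemma ct_eq {α β : ι → ℝ} (hα : Function.Injective α) {i j : ι} (hij : i ≠ j) (t : ℝ) :
    (β i - t * α i) - (β j - t * α j) = (α i - α j) * (ct α β i j - t) := by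
  have : α i - α j ≠ 0 := fun h => hij (hα (by linarith))
  unfold ct
  field_simp
  ring

theorem kinetic [Fintype ι] {α β : ι → ℝ} (hα : Function.Injective α) (T : Finset ℝ)
    (hT : ∀ i j, i ≠ j → ct α β i j ∈ T)
    (hnc : ∀ s, ∃ i j, β i - s * α i ≠ β j - s * α j) :
    Fintype.card ι ≤ 3 * T.card + 1 := by
  classical
  set n := Fintype.card ι with hn
  set k := n / 2 with hk
  let x : ℝ → ι → ℝ := fun t i => β i - t * α i
  have hx : ∀ i j, i ≠ j → ∀ t, x t i - x t j = (α i - α j) * (ct α β i j - t) :=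
    fun i j hij t => ct_eq hα hij t
  have hαne : ∀ i j, i ≠ j → α i - α j ≠ 0 := fun i j hij h => hij (hα (by linarith))
  have hcoll : ∀ i j, i ≠ j → ∀ t, x t i = x t j ↔ ct α β i j = t := by
    intro i j hij t
    have := hx i j hij t
    constructor
    · intro h
      rw [h, sub_self] at this
      rcases mul_eq_zero.1 this.symm with h | h
      · exact absurd h (hαne i j hij)
      · linarith
    · intro h
      rw [h, sub_self, mul_zero] at this
      linarith
  have hinj : ∀ t, t ∉ T → Function.Injective (x t) := by
    intro t ht i j hij
    by_contra hne
    exact ht (((hcoll i j hne t).1 hij) ▸ hT i j hne)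
  -- class sizes
  have hsz : ∀ s i, sz (x s) i ≤ T.card := by
    intro s i
    have : ∃ o, x s o ≠ x s i := by
      by_contra hc
      push Not at hc
      obtain ⟨a, b, hab⟩ := hnc s
      exact hab ((hc a).trans (hc b).symm)
    obtain ⟨o, ho⟩ := this
    unfold sz
    apply Finset.card_le_card_of_injOn (fun j => ct α β o j)
    · intro j hj
      simp at hj
      apply hT
      rintro rfl
      exact ho hj
    · intro j hj l hl hjl
      simp at hj hl
      by_contra hne
      have hoj : o ≠ j := by rintro rfl; exact ho hj
      have hol : o ≠ l := by rintro rfl; exact ho hl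
      simp only at hjl
      have e1 := (hcoll o j hoj (ct α β o j)).2 rfl
      have e2 := (hcoll o l hol (ct α β o j)).2 hjl.symm
      have e3 := (hcoll j l hne (ct α β o j)).1 (by rw [← e1, e2])
      have e4 := (hcoll j l hne s).1 (by rw [hj, hl])
      rw [e3] at e4
      rw [e4] at e1
      exact ho (e1.trans hj)
  let F : Finset ι := Finset.univ.filter (fun i => rk α i < k)
  have main : ∀ m t, t ∉ T → (T.filter (· < t)).card = m →
      ∃ w, w ≤ T.card / 2 ∧ w ≤ k ∧ (F.filter (fun i => k ≤ rk (x t) i)).card ≤ m + w ∧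
      ∀ i j, i ≠ j → k ≤ rk (x t) i + w → rk (x t) i < k + w → k ≤ rk (x t) j + w →
        rk (x t) j < k + w → ct α β i j < t := by
    intro m
    induction m with
    | zero =>
      intro t ht hm
      refine ⟨0, by omega, by omega, ?_, ?_⟩
      · have : F.filter (fun i => k ≤ rk (x t) i) = ∅ := by
          rw [Finset.filter_eq_empty_iff]
          intro i hi
          simp only [F, Finset.mem_filter, Finset.mem_univ, true_and] at hi
          have : rk (x t) i = rk α i := by
            unfold rk
            congr 1
            apply Finset.filter_congr
            intro j _
            by_cases hij : j = i
            · subst hij; simp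
            · have h1 := hx j i hij t
              have h2 : t < ct α β j i := by
                rw [Finset.card_eq_zero, Finset.filter_eq_empty_iff] at hm
                have h3 := hm (hT j i hij)
                have h4 : ct α β j i ≠ t := fun h => ht (h ▸ hT j i hij)
                exact lt_of_le_of_ne (not_lt.1 h3) h4.symm
              constructor
              · intro h; nlinarith
              · intro h; nlinarith
          omega
        rw [this]; simp
      · intro i j hij b1 b2 b3 b4
        omega
    | succ m ih =>
      intro t' ht' hm
      have hne : (T.filter (· < t')).Nonempty := by
        rw [← Finset.card_pos]; omega
      set s := (T.filter (· < t')).max' hne with hs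
      have hsT : s ∈ T.filter (· < t') := Finset.max'_mem _ _
      have hsmax : ∀ y ∈ T, y < t' → y ≤ s := fun y hy hyt =>
        Finset.le_max' _ _ (by simp [hy, hyt])
      rw [Finset.mem_filter] at hsT
      -- pick t
      obtain ⟨t, hts, htall⟩ : ∃ t, t < s ∧ ∀ y ∈ T, y < s → y < t := by
        by_cases he : (T.filter (· < s)).Nonempty
        · have h1 := Finset.max'_mem _ he
          rw [Finset.mem_filter] at h1
          obtain ⟨t, h2, h3⟩ := exists_between h1.2
          refine ⟨t, h3, fun y hy hys => lt_of_le_of_lt ?_ h2⟩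
          exact Finset.le_max' _ _ (by simp [hy, hys])
        · refine ⟨s - 1, by linarith, fun y hy hys => ?_⟩
          exact absurd ⟨y, by simp [hy, hys]⟩ he
      have htT : t ∉ T := fun h => lt_irrefl _ (htall t h hts)
      have hcard : (T.filter (· < t)).card = m := by
        have : T.filter (· < t') = insert s (T.filter (· < t)) := by
          ext y
          simp only [Finset.mem_filter, Finset.mem_insert]
          constructor
          · rintro ⟨h1, h2⟩
            rcases (hsmax y h1 h2).eq_or_lt with h | h
            · left; exact h
            · right; exact ⟨h1, htall y h1 h⟩
          · rintro (h | ⟨h1, h2⟩)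
            · rw [h]; exact hsT
            · exact ⟨h1, by linarith [hsT.2]⟩
        rw [this, Finset.card_insert_of_notMem] at hm
        · omega
        · simp only [Finset.mem_filter, not_and, not_lt]
          intro _; exact hts.le
      have IH := ih t htT hcard
      have hdich : ∀ i j, i ≠ j → ct α β i j ≠ s → ct α β i j < t ∨ t' < ct α β i j := by
        intro i j hij hne
        have h1 := hT i j hij
        rcases lt_or_gt_of_ne hne with h | h
        · left; exact htall _ h1 h
        · right
          by_contra hc
          rcases (not_lt.1 hc).eq_or_lt with h2 | h2
          · exact ht' (h2 ▸ h1)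
          · linarith [hsmax _ h1 h2]
      have href : ∀ τ, t ≤ τ → τ ≤ t' → Refines (x τ) (x s) := by
        intro τ h1 h2 i j hij
        have hne : i ≠ j := by rintro rfl; exact lt_irrefl _ hij
        have e1 := hx i j hne τ
        have e2 := hx i j hne s
        have e3 : ct α β i j ≠ s := fun h => by
          have := (hcoll i j hne s).2 h
          linarith
        have e4 := hαne i j hne
        rcases hdich i j hne e3 with h | h
        · have h5 : ct α β i j - s < 0 := by linarith
          have h6 : 0 < α i - α j := by
            by_contra hc
            nlinarith
          nlinarith
        · have h5 : 0 < ct α β i j - s := by linarith [hsT.2]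
          have h6 : α i - α j < 0 := by
            by_contra hc
            nlinarith
          nlinarith
      refine step (hinj t htT) (hinj t' ht') (href t le_rfl (by linarith [hsT.2]))
        (href t' (by linarith [hsT.2]) le_rfl) k (T.card / 2) (by omega) ?_
        (fun i j => ct α β i j < t) (fun i j => ct α β i j < t') ?_ ?_ ?_ F m IH
      · intro i
        have := hsz s i
        omega
      · intro i j h
        linarith [hsT.2]
      · intro i j hij h
        rw [(hcoll i j hij s).1 h]
        exact hsT.2
      · intro i j hij h
        rw [(hcoll i j hij s).1 h]
        linarith
  -- final time
  obtain ⟨M, hM⟩ : ∃ M, ∀ y ∈ T, y < M := by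
    obtain ⟨M, hM⟩ := T.finite_toSet.bddAbove
    exact ⟨M + 1, fun y hy => by have := hM hy; linarith⟩
  have hMT : M ∉ T := fun h => lt_irrefl _ (hM M h)
  obtain ⟨w, h1, h2, h3, -⟩ := main _ M hMT rfl
  have h4 : T.filter (· < M) = T := Finset.filter_true_of_mem hM
  rw [h4] at h3
  have h5 : F.filter (fun i => k ≤ rk (x M) i) = F := by
    apply Finset.filter_true_of_mem
    intro i hi
    simp only [F, Finset.mem_filter, Finset.mem_univ, true_and] at hi
    have e1 : rk (x M) i = (Finset.univ.filter (fun j => α i < α j)).card := by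
      unfold rk
      congr 1
      apply Finset.filter_congr
      intro j _
      by_cases hij : j = i
      · subst hij; simp
      · have h1 := hx j i hij M
        have h2 := hM _ (hT j i hij)
        constructor
        · intro h; nlinarith
        · intro h; nlinarith
    have e2 : n ≤ (Finset.univ.filter (fun j => α i < α j)).card + (rk α i + 1) := by
      have : (Finset.univ : Finset ι) ⊆ Finset.univ.filter (fun j => α i < α j) ∪
          (Finset.univ.filter (fun j => α j < α i) ∪ {i}) := by
        intro j _
        simp only [Finset.mem_union, Finset.mem_filter, Finset.mem_univ, true_and,
          Finset.mem_singleton]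
        rcases lt_trichotomy (α i) (α j) with h | h | h
        · left; exact h
        · right; right; exact (hα h).symm
        · right; left; exact h
      have h7 := Finset.card_le_card this
      have h8 := h7.trans (Finset.card_union_le _ _)
      have h9 := Finset.card_union_le (Finset.univ.filter (fun j => α j < α i)) {i}
      rw [Finset.card_singleton] at h9
      rw [Finset.card_univ] at h8
      unfold rk
      omega
    omega
  rw [h5] at h3
  have h6 : k ≤ F.card := by
    have : (Finset.range k).card ≤ F.card := by
      have hs : Finset.range k ⊆ F.image (rk α) := by
        intro r hr
        rw [Finset.mem_range] at hr
        obtain ⟨i, hi⟩ := rk_surj hα (r := r) (by omega)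
        rw [Finset.mem_image]
        exact ⟨i, by simp [F, hi, hr], hi⟩
      exact (Finset.card_le_card hs).trans Finset.card_image_le
    simpa using this
  omega

end Kinetic
end DirBound

namespace DirBound

section Scaling
variable {ι J : Type*} [Fintype J]

open Classical in
theorem exists_scaling (R : Finset ι) (A : ι → J → ℝ) (τ : ι → ℝ) (δ : ℝ) (hδ : 0 < δ)
    (hτ : ∀ i ∈ R, δ ≤ τ i)
    (hS : ∀ i ∈ R, (Finset.univ.filter (fun j => A i j ≠ 0)).card = 3)
    (j0 : J)
    (hconn : ∀ j, ∃ k, (∃ i ∈ R, A i j ≠ 0 ∧ A i k ≠ 0) ∧ (∃ i ∈ R, A i k ≠ 0 ∧ A i j0 ≠ 0)) :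
    ∃ c : J → ℝ, (∀ j, 0 < c j) ∧
      ∀ j, ∑ i ∈ R, τ i * (3 * ((A i j)^2 * c j) / ∑ l, (A i l)^2 * c l) =
        ∑ i ∈ R, if A i j ≠ 0 then τ i else 0 := by
  let S : ι → Finset J := fun i => Finset.univ.filter (fun j => A i j ≠ 0)
  let Q : ι → (J → ℝ) → ℝ := fun i s => ∑ l, (A i l)^2 * Real.exp (s l)
  let h : ι → (J → ℝ) → ℝ := fun i s => 3 * Real.log (Q i s) - ∑ j ∈ S i, s j
  let Ψ : (J → ℝ) → ℝ := fun s => ∑ i ∈ R, τ i * h i s + (s j0)^2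
  have hmemS : ∀ i j, j ∈ S i ↔ A i j ≠ 0 := by intro i j; simp [S]
  have hQge : ∀ i j s, (A i j)^2 * Real.exp (s j) ≤ Q i s := by
    intro i j s
    exact Finset.single_le_sum (f := fun l => (A i l)^2 * Real.exp (s l))
      (fun l _ => by positivity) (Finset.mem_univ j)
  have hQpos : ∀ i ∈ R, ∀ s, 0 < Q i s := by
    intro i hi s
    have : (S i).Nonempty := by rw [← Finset.card_pos]; simp only [S]; rw [hS i hi]; norm_num
    obtain ⟨j, hj⟩ := this
    rw [hmemS] at hj
    exact lt_of_lt_of_le (by positivity) (hQge i j s)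
  have hlog : ∀ i j s, A i j ≠ 0 → Real.log ((A i j)^2) + s j ≤ Real.log (Q i s) := by
    intro i j s hj
    have h1 : 0 < (A i j)^2 := by positivity
    have := Real.log_le_log (by positivity) (hQge i j s)
    rwa [Real.log_mul h1.ne' (Real.exp_pos _).ne', Real.log_exp] at this
  let Cc : ι → ℝ := fun i => 3 * ∑ l, |Real.log ((A i l)^2)|
  have hCl : ∀ i l, 3 * |Real.log ((A i l)^2)| ≤ Cc i := by
    intro i l
    have := Finset.single_le_sum (f := fun l => |Real.log ((A i l)^2)|)
      (fun l _ => abs_nonneg _) (Finset.mem_univ l)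
    simp only [Cc]
    linarith
  have hCl' : ∀ i l, -(Cc i) / 3 ≤ Real.log ((A i l)^2) := by
    intro i l
    have := hCl i l
    have := neg_abs_le (Real.log ((A i l)^2))
    linarith
  -- row bounds
  have hrow0 : ∀ i ∈ R, ∀ s, -(Cc i) ≤ h i s := by
    intro i hi s
    obtain ⟨a, b, c, hab, hac, hbc, he⟩ := Finset.card_eq_three.1 (hS i hi)
    have hSi : S i = {a, b, c} := he
    have ha : A i a ≠ 0 := (hmemS i a).1 (by rw [hSi]; simp)
    have hb : A i b ≠ 0 := (hmemS i b).1 (by rw [hSi]; simp)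
    have hc : A i c ≠ 0 := (hmemS i c).1 (by rw [hSi]; simp)
    have hsum : ∑ j ∈ S i, s j = s a + (s b + s c) := by
      rw [hSi, Finset.sum_insert (by simp [hab, hac]), Finset.sum_insert (by simp [hbc]),
        Finset.sum_singleton]
    simp only [h]
    rw [hsum]
    linarith [hlog i a s ha, hlog i b s hb, hlog i c s hc, hCl' i a, hCl' i b, hCl' i c]
  have hrow : ∀ i ∈ R, ∀ s j k, A i j ≠ 0 → A i k ≠ 0 → -(Cc i) + (s j - s k) ≤ h i s := by
    intro i hi s j k hj hk
    by_cases hjk : j = k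
    · subst hjk
      have := hrow0 i hi s
      linarith
    · have hsub : ((S i).erase j).erase k = ((S i).erase j).erase k := rfl
      have hjS : j ∈ S i := (hmemS i j).2 hj
      have hkS : k ∈ (S i).erase j := Finset.mem_erase.2 ⟨fun h => hjk h.symm, (hmemS i k).2 hk⟩
      have hcard : (((S i).erase j).erase k).card = 1 := by
        rw [Finset.card_erase_of_mem hkS, Finset.card_erase_of_mem hjS]
        have := hS i hi
        simp only [S]
        rw [this]
      obtain ⟨l, hl⟩ := Finset.card_eq_one.1 hcard
      have hlS : A i l ≠ 0 := by
        have : l ∈ ((S i).erase j).erase k := by rw [hl]; simp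
        rw [← hmemS]
        exact Finset.mem_of_mem_erase (Finset.mem_of_mem_erase this)
      have hsum : ∑ j ∈ S i, s j = s j + (s k + s l) := by
        rw [← Finset.add_sum_erase _ _ hjS, ← Finset.add_sum_erase _ _ hkS, hl,
          Finset.sum_singleton]
      simp only [h]
      rw [hsum]
      linarith [hlog i j s hj, hlog i l s hlS, hCl' i j, hCl' i l]
  let C' : ℝ := ∑ i ∈ R, τ i * Cc i
  have hτpos : ∀ i ∈ R, 0 < τ i := fun i hi => lt_of_lt_of_le hδ (hτ i hi)
  have hΨ0 : ∀ s, (s j0)^2 ≤ Ψ s + C' := by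
    intro s
    have : 0 ≤ ∑ i ∈ R, (τ i * h i s + τ i * Cc i) := by
      apply Finset.sum_nonneg
      intro i hi
      have := hrow0 i hi s
      have := hτpos i hi
      nlinarith
    rw [Finset.sum_add_distrib] at this
    simp only [Ψ, C']
    linarith
  have hΨ1 : ∀ s, ∀ i ∈ R, ∀ j k, A i j ≠ 0 → A i k ≠ 0 → δ * (s j - s k) ≤ Ψ s + C' := by
    intro s i hi j k hj hk
    have h1 : τ i * h i s + τ i * Cc i ≤ ∑ i ∈ R, (τ i * h i s + τ i * Cc i) := by
      apply Finset.single_le_sum (f := fun i => τ i * h i s + τ i * Cc i) _ hi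
      intro i hi
      have := hrow0 i hi s
      have := hτpos i hi
      nlinarith
    rw [Finset.sum_add_distrib] at h1
    have h2 := hrow i hi s j k hj hk
    have h3 := hrow i hi s k k hk hk
    have h4 := hτpos i hi
    have h5 := hτ i hi
    have h6 := sq_nonneg (s j0)
    have h7 : δ * (s j - s k) ≤ τ i * h i s + τ i * Cc i := by
      rcases le_total (s j - s k) 0 with hneg | hpos
      · nlinarith
      · nlinarith
    simp only [Ψ, C']
    linarith
  have hcont : Continuous Ψ := by
    simp only [Ψ, h, Q]
    refine Continuous.add (continuous_finsetSum _ fun i hi => ?_) (by fun_prop)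
    refine continuous_const.mul (Continuous.sub (continuous_const.mul ?_) (by fun_prop))
    refine Continuous.log (by fun_prop) (fun s => (hQpos i hi s).ne')
  let M1 : ℝ := (Ψ 0 + C') / δ
  let M2 : ℝ := 1 + (Ψ 0 + C')
  have hC0 : 0 ≤ Ψ 0 + C' := by
    have := hΨ0 0
    simpa using this
  have hM1 : 0 ≤ M1 := div_nonneg hC0 hδ.le
  let M : ℝ := 2 * M1 + M2
  have hMpos : 0 ≤ M := by simp only [M, M2]; linarith
  have hbox : ∀ s, Ψ s ≤ Ψ 0 → s ∈ Set.Icc (fun _ : J => -M) (fun _ => M) := by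
    intro s hs
    have b0 : |s j0| ≤ M2 := by
      have := hΨ0 s
      simp only [M2]
      rw [abs_le]
      constructor <;> nlinarith
    have b1 : ∀ i ∈ R, ∀ j k, A i j ≠ 0 → A i k ≠ 0 → |s j - s k| ≤ M1 := by
      intro i hi j k hj hk
      have e1 := hΨ1 s i hi j k hj hk
      have e2 := hΨ1 s i hi k j hk hj
      simp only [M1]
      rw [abs_le]
      constructor
      · rw [neg_le, le_div_iff₀ hδ]; linarith
      · rw [le_div_iff₀ hδ]; linarith
    have b2 : ∀ j, |s j| ≤ M := by
      intro j
      obtain ⟨k, ⟨i, hi, hj, hk⟩, ⟨i', hi', hk', hj0⟩⟩ := hconn j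
      have e1 := abs_le.1 (b1 i hi j k hj hk)
      have e2 := abs_le.1 (b1 i' hi' k j0 hk' hj0)
      have e3 := abs_le.1 b0
      simp only [M]
      rw [abs_le]
      constructor <;> linarith [e1.1, e1.2, e2.1, e2.2, e3.1, e3.2]
    constructor
    · intro j; exact (abs_le.1 (b2 j)).1
    · intro j; exact (abs_le.1 (b2 j)).2
  obtain ⟨s, -, hsmin⟩ := (isCompact_Icc (a := fun _ : J => -M) (b := fun _ : J => M)).exists_isMinOn
    ⟨0, hbox 0 le_rfl⟩ hcont.continuousOn
  have hmin : ∀ s', Ψ s ≤ Ψ s' := by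
    intro s'
    by_cases hc : Ψ s' ≤ Ψ 0
    · exact hsmin (hbox s' hc)
    · exact (hsmin (hbox 0 le_rfl)).trans (not_le.1 hc).le
  -- derivatives
  have hder : ∀ j, ∑ i ∈ R, τ i * (3 * (((A i j)^2 * Real.exp (s j)) / Q i s) -
      (if A i j ≠ 0 then 1 else 0)) + (if j = j0 then 2 * s j0 else 0) = 0 := by
    intro j
    let e : J → ℝ := fun l => if l = j then 1 else 0
    let γ : ℝ → (J → ℝ) := fun ε l => s l + ε * e l
    have hγ0 : γ 0 = s := by funext l; simp [γ]
    have hγd : ∀ l, HasDerivAt (fun ε => γ ε l) (e l) 0 := by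
      intro l
      simp only [γ]
      simpa using ((hasDerivAt_id (0:ℝ)).mul_const (e l)).const_add (s l)
    have hQd : ∀ i, HasDerivAt (fun ε => Q i (γ ε)) ((A i j)^2 * Real.exp (s j)) 0 := by
      intro i
      have : HasDerivAt (fun ε => ∑ l, (A i l)^2 * Real.exp (γ ε l))
          (∑ l, (A i l)^2 * (Real.exp (γ 0 l) * e l)) 0 := by
        apply HasDerivAt.fun_sum
        intro l _
        exact ((hγd l).exp).const_mul _
      have e2 : ∑ l, (A i l)^2 * (Real.exp (γ 0 l) * e l) = (A i j)^2 * Real.exp (s j) := by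
        rw [hγ0]
        simp [e]
      rw [e2] at this
      exact this
    have hhd : ∀ i ∈ R, HasDerivAt (fun ε => h i (γ ε))
        (3 * (((A i j)^2 * Real.exp (s j)) / Q i s) - (if A i j ≠ 0 then 1 else 0)) 0 := by
      intro i hi
      have h1 : HasDerivAt (fun ε => Real.log (Q i (γ ε)))
          (((A i j)^2 * Real.exp (s j)) / Q i (γ 0)) 0 :=
        (hQd i).log (hQpos i hi _).ne'
      rw [hγ0] at h1
      have h2 : HasDerivAt (fun ε => ∑ l ∈ S i, γ ε l) (∑ l ∈ S i, e l) 0 :=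
        HasDerivAt.fun_sum (fun l _ => hγd l)
      have h3 : ∑ l ∈ S i, e l = if A i j ≠ 0 then 1 else 0 := by
        simp only [e, Finset.sum_ite_eq', hmemS]
      rw [h3] at h2
      exact (h1.const_mul 3).sub h2
    have hΨd : HasDerivAt (fun ε => Ψ (γ ε)) (∑ i ∈ R, τ i * (3 * (((A i j)^2 * Real.exp (s j)) / Q i s) -
      (if A i j ≠ 0 then 1 else 0)) + (if j = j0 then 2 * s j0 else 0)) 0 := by
      have h1 := HasDerivAt.fun_sum (u := R) (fun i hi => (hhd i hi).const_mul (τ i))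
      have h2 := (hγd j0).fun_pow 2
      have h3 : ((2:ℕ):ℝ) * γ 0 j0 ^ (2 - 1) * e j0 = if j = j0 then 2 * s j0 else 0 := by
        rw [hγ0]
        by_cases hh : j = j0
        · simp [e, hh]
        · simp [e, hh, Ne.symm hh]
      rw [h3] at h2
      exact h1.add h2
    have hlm : IsLocalMin (fun ε => Ψ (γ ε)) 0 := by
      apply Filter.Eventually.of_forall
      intro ε
      simp only [hγ0]
      exact hmin _
    exact hlm.hasDerivAt_eq_zero hΨd
  have hsumj : ∀ i ∈ R, ∑ j, (3 * (((A i j)^2 * Real.exp (s j)) / Q i s) -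
      (if A i j ≠ 0 then (1:ℝ) else 0)) = 0 := by
    intro i hi
    rw [Finset.sum_sub_distrib, ← Finset.mul_sum, ← Finset.sum_div]
    have : (∑ j, (A i j)^2 * Real.exp (s j)) / Q i s = 1 := div_self (hQpos i hi s).ne'
    rw [this, Finset.sum_boole, hS i hi]
    norm_num
  have hs0 : s j0 = 0 := by
    have h1 := Finset.sum_eq_zero (s := Finset.univ) (fun j _ => hder j)
    rw [Finset.sum_add_distrib, Finset.sum_comm] at h1
    have h2 : ∑ i ∈ R, ∑ j, τ i * (3 * (((A i j)^2 * Real.exp (s j)) / Q i s) -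
      (if A i j ≠ 0 then (1:ℝ) else 0)) = 0 := by
      apply Finset.sum_eq_zero
      intro i hi
      rw [← Finset.mul_sum, hsumj i hi, mul_zero]
    rw [h2] at h1
    simpa using h1
  refine ⟨fun j => Real.exp (s j), fun j => Real.exp_pos _, fun j => ?_⟩
  have h1 := hder j
  rw [hs0] at h1
  simp only [mul_zero, ite_self, add_zero] at h1
  rw [← sub_eq_zero, ← Finset.sum_sub_distrib]
  refine Eq.trans ?_ h1
  apply Finset.sum_congr rfl
  intro i _
  simp only [Q]
  split_ifs <;> ring

end Scaling

section Trace
variable {ι J : Type*} [Fintype J]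

open Classical in
theorem trace_bound (R : Finset ι) (Z : ι → J → ℝ) (K : Submodule ℝ (EuclideanSpace ℝ J))
    (hunit : ∀ j, ∑ i ∈ R, (Z i j)^2 = 1)
    (hK : ∀ f ∈ K, ∀ i ∈ R, ∑ j, Z i j * f j = 0) :
    (Module.finrank ℝ K : ℝ) ≤ ∑ j, ∑ k, if j = k then 0 else (∑ i ∈ R, Z i j * Z i k)^2 := by
  set D := Module.finrank ℝ K with hD
  let b := stdOrthonormalBasis ℝ K
  let e : Fin D → J → ℝ := fun a j => (b a : EuclideanSpace ℝ J) j
  have horth : ∀ a a', ∑ j, e a j * e a' j = if a = a' then 1 else 0 := by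
    intro a a'
    have h1 := (orthonormal_iff_ite.1 b.orthonormal) a a'
    rw [Submodule.coe_inner, PiLp.inner_apply] at h1
    rw [← h1]
    apply Finset.sum_congr rfl
    intro j _
    simp [e, mul_comm]
  let G : J → J → ℝ := fun j k => ∑ i ∈ R, Z i j * Z i k
  let Pr : J → J → ℝ := fun j k => ∑ a, e a j * e a k
  let O : J → J → ℝ := fun j k => if j = k then 0 else G j k
  have hG : ∀ a, ∑ j, ∑ k, G j k * (e a j * e a k) = 0 := by
    intro a
    have h1 : ∀ i ∈ R, (∑ j, Z i j * e a j)^2 = 0 := by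
      intro i hi
      have := hK (b a) (b a).2 i hi
      rw [show ∑ j, Z i j * e a j = 0 from this]
      norm_num
    rw [← Finset.sum_eq_zero h1]
    simp only [sq, G, Finset.sum_mul]
    rw [Finset.sum_comm' (s := R) (t := fun _ => Finset.univ) (t' := Finset.univ) (s' := fun _ => R) (by simp)]
    apply Finset.sum_congr rfl
    intro j _
    rw [Finset.sum_comm]
    apply Finset.sum_congr rfl
    intro i _
    rw [Finset.mul_sum]
    apply Finset.sum_congr rfl
    intro k _
    ring
  have hGO : ∀ j k, G j k = (if j = k then 1 else 0) + O j k := by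
    intro j k
    by_cases h : j = k
    · subst h
      simp only [O, G, if_true, add_zero]
      rw [← hunit j]
      apply Finset.sum_congr rfl
      intro i _; ring
    · simp [O, h]
  have hO : (D : ℝ) = - ∑ j, ∑ k, O j k * Pr j k := by
    have h1 : ∑ a, ∑ j, ∑ k, G j k * (e a j * e a k) = 0 := Finset.sum_eq_zero (fun a _ => hG a)
    have h2 : ∑ a, ∑ j, ∑ k, G j k * (e a j * e a k) = ∑ j, ∑ k, G j k * Pr j k := by
      rw [Finset.sum_comm]
      apply Finset.sum_congr rfl
      intro j _
      rw [Finset.sum_comm]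
      apply Finset.sum_congr rfl
      intro k _
      simp only [Pr, Finset.mul_sum]
    have h3 : ∑ j, ∑ k, G j k * Pr j k = ∑ j, Pr j j + ∑ j, ∑ k, O j k * Pr j k := by
      rw [← Finset.sum_add_distrib]
      apply Finset.sum_congr rfl
      intro j _
      simp only [hGO, add_mul, Finset.sum_add_distrib]
      simp
    have h4 : ∑ j, Pr j j = D := by
      simp only [Pr]
      rw [Finset.sum_comm]
      simp [horth]
    linarith
  have hPr : ∑ j, ∑ k, (Pr j k)^2 = D := by
    have h1 : ∑ j, ∑ k, (Pr j k)^2 = ∑ a, ∑ a', (∑ j, e a j * e a' j)^2 := by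
      simp only [Pr, sq, Finset.sum_mul_sum]
      have : ∀ (f : J → J → Fin D → Fin D → ℝ), ∑ j, ∑ k, ∑ a, ∑ a', f j k a a' =
          ∑ a, ∑ a', ∑ j, ∑ k, f j k a a' := by
        intro f
        calc _ = ∑ j, ∑ a, ∑ k, ∑ a', f j k a a' :=
              Finset.sum_congr rfl fun j _ => Finset.sum_comm
          _ = ∑ a, ∑ j, ∑ k, ∑ a', f j k a a' := Finset.sum_comm
          _ = ∑ a, ∑ j, ∑ a', ∑ k, f j k a a' :=
              Finset.sum_congr rfl fun a _ => Finset.sum_congr rfl fun j _ => Finset.sum_comm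
          _ = _ := Finset.sum_congr rfl fun a _ => Finset.sum_comm
      rw [this]
      refine Finset.sum_congr rfl fun a _ => Finset.sum_congr rfl fun a' _ =>
        Finset.sum_congr rfl fun j _ => Finset.sum_congr rfl fun k _ => by ring
    rw [h1]
    simp [horth]
  have hOsq : ∑ j, ∑ k, (O j k)^2 = ∑ j, ∑ k, if j = k then 0 else (∑ i ∈ R, Z i j * Z i k)^2 := by
    refine Finset.sum_congr rfl fun j _ => Finset.sum_congr rfl fun k _ => ?_
    simp only [O, G]
    split_ifs <;> simp
  rw [← hOsq]
  have hCS : (∑ j, ∑ k, O j k * Pr j k)^2 ≤ (∑ j, ∑ k, (O j k)^2) * (∑ j, ∑ k, (Pr j k)^2) := by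
    have := Finset.sum_mul_sq_le_sq_mul_sq (Finset.univ : Finset (J × J))
      (fun x => O x.1 x.2) (fun x => Pr x.1 x.2)
    simpa only [Fintype.sum_prod_type] using this
  rw [hPr] at hCS
  have h5 : (D:ℝ)^2 ≤ (∑ j, ∑ k, (O j k)^2) * D := by
    rw [hO] at hCS ⊢
    linarith [hCS, neg_sq (∑ j, ∑ k, O j k * Pr j k)]
  rcases Nat.eq_zero_or_pos D with h0 | hpos
  · rw [h0]
    simp only [Nat.cast_zero]
    exact Finset.sum_nonneg fun j _ => Finset.sum_nonneg fun k _ => sq_nonneg _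
  · have : (0:ℝ) < D := by exact_mod_cast hpos
    nlinarith

end Trace

section Design
variable {ι J : Type*} [Fintype J]

open Classical in
/-- common weight of two columns -/
noncomputable def Wt (R : Finset ι) (A : ι → J → ℝ) (τ : ι → ℝ) (j k : J) : ℝ :=
  ∑ i ∈ R, if A i j ≠ 0 ∧ A i k ≠ 0 then τ i else 0

open Classical in
theorem design_bound (R : Finset ι) (A : ι → J → ℝ) (τ : ι → ℝ) (δ : ℝ) (hδ : 0 < δ)
    (hτ : ∀ i ∈ R, δ ≤ τ i)
    (hS : ∀ i ∈ R, (Finset.univ.filter (fun j => A i j ≠ 0)).card = 3)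
    (j0 : J)
    (hconn : ∀ j, ∃ k, (∃ i ∈ R, A i j ≠ 0 ∧ A i k ≠ 0) ∧ (∃ i ∈ R, A i k ≠ 0 ∧ A i j0 ≠ 0))
    (K : Submodule ℝ (J → ℝ)) (hK : ∀ f ∈ K, ∀ i ∈ R, ∑ j, A i j * f j = 0) :
    (Module.finrank ℝ K : ℝ) ≤ 9 / 4 * ∑ j, ∑ k, if j = k then 0 else
      (Wt R A τ j k)^2 / (Wt R A τ j j * Wt R A τ k k) := by
  obtain ⟨c, hc, hcs⟩ := exists_scaling R A τ δ hδ hτ hS j0 hconn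
  have hτpos : ∀ i ∈ R, 0 < τ i := fun i hi => lt_of_lt_of_le hδ (hτ i hi)
  let T : J → ℝ := fun j => Wt R A τ j j
  have hT : ∀ j, T j = ∑ i ∈ R, if A i j ≠ 0 then τ i else 0 := by
    intro j; simp only [T, Wt, and_self]
  have hTpos : ∀ j, 0 < T j := by
    intro j
    obtain ⟨k, ⟨i, hi, hj, -⟩, -⟩ := hconn j
    rw [hT]
    apply Finset.sum_pos' (fun i hi => ?_) ⟨i, hi, by simp [hj, hτpos i hi]⟩
    split_ifs
    · exact (hτpos i hi).le
    · exact le_rfl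
  let Q : ι → ℝ := fun i => ∑ l, (A i l)^2 * c l
  have hQpos : ∀ i ∈ R, 0 < Q i := by
    intro i hi
    have : (Finset.univ.filter (fun j => A i j ≠ 0)).Nonempty := by
      rw [← Finset.card_pos, hS i hi]; norm_num
    obtain ⟨j, hj⟩ := this
    simp at hj
    apply Finset.sum_pos' (fun l _ => by have := hc l; positivity) ⟨j, Finset.mem_univ _, by have := hc j; positivity⟩
  let Z : ι → J → ℝ := fun i j => A i j * (√(3 * τ i / Q i) * (√(c j) / √(T j)))
  have hZsq : ∀ i ∈ R, ∀ j, (Z i j)^2 = τ i * (3 * ((A i j)^2 * c j) / Q i) / T j := by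
    intro i hi j
    have h1 : 0 ≤ 3 * τ i / Q i := by
      have := hτpos i hi; have := hQpos i hi; positivity
    simp only [Z, mul_pow, div_pow]
    rw [Real.sq_sqrt h1, Real.sq_sqrt (hc j).le, Real.sq_sqrt (hTpos j).le]
    have := hQpos i hi
    have := hTpos j
    field_simp
  have hunit : ∀ j, ∑ i ∈ R, (Z i j)^2 = 1 := by
    intro j
    rw [Finset.sum_congr rfl (fun i hi => hZsq i hi j), ← Finset.sum_div, hcs j, ← hT]
    exact div_self (hTpos j).ne'
  let L : (J → ℝ) ≃ₗ[ℝ] EuclideanSpace ℝ J :=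
    (LinearEquiv.piCongrRight (fun j => LinearEquiv.smulOfNeZero ℝ ℝ (√(T j) / √(c j))
      (div_pos (Real.sqrt_pos.2 (hTpos j)) (Real.sqrt_pos.2 (hc j))).ne')).trans
      (WithLp.linearEquiv 2 ℝ (J → ℝ)).symm
  have hL : ∀ f j, L f j = (√(T j) / √(c j)) * f j := by
    intro f j
    simp [L]
  have hfin : Module.finrank ℝ K = Module.finrank ℝ (K.map (L : (J → ℝ) →ₗ[ℝ] EuclideanSpace ℝ J)) :=
    (LinearEquiv.finrank_map_eq L K).symm
  have htr := trace_bound R Z (K.map (L : (J → ℝ) →ₗ[ℝ] EuclideanSpace ℝ J)) hunit (by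
    intro f hf i hi
    obtain ⟨f, hfK, rfl⟩ := hf
    have h1 : ∀ j, Z i j * (L f j) = √(3 * τ i / Q i) * (A i j * f j) := by
      intro j
      rw [hL]
      have := Real.sqrt_pos.2 (hTpos j)
      have := Real.sqrt_pos.2 (hc j)
      simp only [Z]
      field_simp
    have h2 := hK f hfK i hi
    calc ∑ j, Z i j * (L f j) = ∑ j, √(3 * τ i / Q i) * (A i j * f j) :=
          Finset.sum_congr rfl fun j _ => h1 j
      _ = 0 := by rw [← Finset.mul_sum, h2, mul_zero])
  rw [← hfin] at htr
  refine htr.trans ?_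
  rw [Finset.mul_sum]
  refine Finset.sum_le_sum fun j _ => ?_
  rw [Finset.mul_sum]
  refine Finset.sum_le_sum fun k _ => ?_
  split_ifs with hjk
  · simp
  -- bound of a single entry
  have hTT : 0 < √(T j) * √(T k) := mul_pos (Real.sqrt_pos.2 (hTpos j)) (Real.sqrt_pos.2 (hTpos k))
  have hent : ∀ i ∈ R, |Z i j * Z i k| * (√(T j) * √(T k)) ≤
      3 / 2 * (if A i j ≠ 0 ∧ A i k ≠ 0 then τ i else 0) := by
    intro i hi
    by_cases hh : A i j ≠ 0 ∧ A i k ≠ 0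
    · rw [if_pos hh]
      have hq := hQpos i hi
      have ht := hτpos i hi
      have hsum : (A i j)^2 * c j + (A i k)^2 * c k ≤ Q i := by
        have h1 := Finset.sum_le_sum_of_subset_of_nonneg (f := fun l => (A i l)^2 * c l)
          (Finset.subset_univ ({j, k} : Finset J)) (fun l _ _ => by have := hc l; positivity)
        rw [Finset.sum_pair hjk] at h1
        exact h1
      have hz : ∀ l, (|Z i l| * √(T l))^2 = τ i * (3 * ((A i l)^2 * c l) / Q i) := by
        intro l
        rw [mul_pow, sq_abs, hZsq i hi, Real.sq_sqrt (hTpos l).le, div_mul_cancel₀ _ (hTpos l).ne']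
      have h2 : (|Z i j| * √(T j))^2 + (|Z i k| * √(T k))^2 ≤ 3 * τ i := by
        rw [hz, hz]
        have : τ i * (3 * (A i j ^ 2 * c j) / Q i) + τ i * (3 * (A i k ^ 2 * c k) / Q i)
          = 3 * τ i * ((A i j ^ 2 * c j + A i k ^ 2 * c k) / Q i) := by field_simp
        rw [this]
        have h3 : (A i j ^ 2 * c j + A i k ^ 2 * c k) / Q i ≤ 1 := (div_le_one hq).2 hsum
        nlinarith
      rw [abs_mul]
      nlinarith [sq_nonneg (|Z i j| * √(T j) - |Z i k| * √(T k))]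
    · rw [if_neg hh]
      have : A i j = 0 ∨ A i k = 0 := by
        by_contra hcon
        push Not at hcon
        exact hh hcon
      rcases this with h | h <;> simp [Z, h]
  have hsum : |∑ i ∈ R, Z i j * Z i k| * (√(T j) * √(T k)) ≤ 3 / 2 * Wt R A τ j k := by
    calc _ ≤ (∑ i ∈ R, |Z i j * Z i k|) * (√(T j) * √(T k)) :=
          mul_le_mul_of_nonneg_right (Finset.abs_sum_le_sum_abs _ _) hTT.le
      _ = ∑ i ∈ R, |Z i j * Z i k| * (√(T j) * √(T k)) := by rw [Finset.sum_mul]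
      _ ≤ ∑ i ∈ R, 3 / 2 * (if A i j ≠ 0 ∧ A i k ≠ 0 then τ i else 0) := Finset.sum_le_sum hent
      _ = _ := by rw [← Finset.mul_sum]; rfl
  have hsq := pow_le_pow_left₀ (by positivity) hsum 2
  rw [mul_pow, mul_pow, mul_pow, sq_abs, Real.sq_sqrt (hTpos j).le, Real.sq_sqrt (hTpos k).le] at hsq
  have hTT' : 0 < T j * T k := mul_pos (hTpos j) (hTpos k)
  change _ ≤ 9 / 4 * (Wt R A τ j k ^ 2 / (T j * T k))
  rw [← mul_div_assoc, le_div_iff₀ hTT']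
  linarith

end Design
end DirBound

namespace DirBound

section Comb
variable {Pt X : Type*} [Fintype Pt]

open Classical in
/-- number of further points on the line `pq` -/
noncomputable def mm (σ : Pt → Pt → X) (p q : Pt) : ℕ :=
  (Finset.univ.filter (fun s => s ≠ p ∧ s ≠ q ∧ σ p s = σ p q)).card

def Col (σ : Pt → Pt → X) (p q r : Pt) : Prop := p ≠ q ∧ p ≠ r ∧ q ≠ r ∧ σ p r = σ p q

variable {σ : Pt → Pt → X}

open Classical in
noncomputable def aw (σ : Pt → Pt → X) (p q r : Pt) : ℝ := if Col σ p q r then 1 / (mm σ p q : ℝ) else 0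

open Classical in
noncomputable def bw (σ : Pt → Pt → X) (p q : Pt) (u : X) : ℝ :=
  if p ≠ q ∧ mm σ p q = 0 ∧ σ p q = u then 3 / 2 else 0

lemma Col.swap12 (hsymm : ∀ p q, σ p q = σ q p)
    (htri : ∀ p q r, p ≠ q → p ≠ r → q ≠ r → σ p r = σ p q → σ q r = σ p q) {p q r : Pt} (h : Col σ p q r) : Col σ q p r := by
  obtain ⟨h1, h2, h3, h4⟩ := h
  exact ⟨h1.symm, h3, h2, by rw [htri p q r h1 h2 h3 h4, hsymm]⟩

lemma Col.swap23 {p q r : Pt} (h : Col σ p q r) : Col σ p r q := by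
  obtain ⟨h1, h2, h3, h4⟩ := h
  exact ⟨h2, h1, h3.symm, h4.symm⟩

lemma mm_symm (hsymm : ∀ p q, σ p q = σ q p)
    (htri : ∀ p q r, p ≠ q → p ≠ r → q ≠ r → σ p r = σ p q → σ q r = σ p q) (p q : Pt) (hpq : p ≠ q) : mm σ p q = mm σ q p := by
  classical
  unfold mm
  congr 1
  apply Finset.filter_congr
  intro s _
  constructor
  · rintro ⟨h1, h2, h3⟩
    exact ⟨h2, h1, (Col.swap12 hsymm htri ⟨hpq, h1.symm, h2.symm, h3⟩).2.2.2⟩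
  · rintro ⟨h1, h2, h3⟩
    exact ⟨h2, h1, (Col.swap12 hsymm htri ⟨hpq.symm, h1.symm, h2.symm, h3⟩).2.2.2⟩

lemma mm_swap {p q r : Pt} (h : Col σ p q r) : mm σ p q = mm σ p r := by
  classical
  obtain ⟨h1, h2, h3, h4⟩ := h
  have key : ∀ x, x ≠ p → mm σ p x + 1 = (Finset.univ.filter (fun s => s ≠ p ∧ σ p s = σ p x)).card := by
    intro x hx
    unfold mm
    have : Finset.univ.filter (fun s => s ≠ p ∧ s ≠ x ∧ σ p s = σ p x) =
        (Finset.univ.filter (fun s => s ≠ p ∧ σ p s = σ p x)).erase x := by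
      ext s; simp; tauto
    rw [this, Finset.card_erase_add_one]
    simp [hx]
  have e1 := key q h1.symm
  have e2 := key r h2.symm
  rw [h4] at e2
  omega

lemma aw_swap12 (hsymm : ∀ p q, σ p q = σ q p)
    (htri : ∀ p q r, p ≠ q → p ≠ r → q ≠ r → σ p r = σ p q → σ q r = σ p q) (p q r : Pt) : aw σ p q r = aw σ q p r := by
  unfold aw
  by_cases h : Col σ p q r
  · rw [if_pos h, if_pos (h.swap12 hsymm htri), mm_symm hsymm htri p q h.1]
  · rw [if_neg h, if_neg (fun h' => h (Col.swap12 hsymm htri h'))]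

lemma aw_swap23 (p q r : Pt) : aw σ p q r = aw σ p r q := by
  unfold aw
  by_cases h : Col σ p q r
  · rw [if_pos h, if_pos h.swap23, mm_swap h]
  · rw [if_neg h, if_neg (fun h' => h (Col.swap23 h'))]

lemma bw_symm (hsymm : ∀ p q, σ p q = σ q p)
    (htri : ∀ p q r, p ≠ q → p ≠ r → q ≠ r → σ p r = σ p q → σ q r = σ p q) (p q : Pt) (u : X) : bw σ p q u = bw σ q p u := by
  unfold bw
  by_cases h : p = q
  · subst h; rfl
  · rw [mm_symm hsymm htri p q h, hsymm p q]
    classical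
    exact if_congr ⟨fun a => ⟨Ne.symm h, a.2⟩, fun a => ⟨h, a.2⟩⟩ rfl rfl

open Classical in
lemma aw_sum (p q : Pt) : ∑ r, aw σ p q r = if p ≠ q ∧ mm σ p q ≠ 0 then 1 else 0 := by
  unfold aw
  by_cases hpq : p = q
  · subst hpq
    simp [Col]
  · have : ∀ r, (if Col σ p q r then 1 / (mm σ p q : ℝ) else 0) =
        if (r ≠ p ∧ r ≠ q ∧ σ p r = σ p q) then 1 / (mm σ p q : ℝ) else 0 := by
      intro r
      apply if_congr _ rfl rfl
      unfold Col
      constructor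
      · rintro ⟨_, h2, h3, h4⟩; exact ⟨h2.symm, h3.symm, h4⟩
      · rintro ⟨h2, h3, h4⟩; exact ⟨hpq, h2.symm, h3.symm, h4⟩
    rw [Finset.sum_congr rfl (fun r _ => this r), ← Finset.sum_filter, Finset.sum_const,
      nsmul_eq_mul]
    change (mm σ p q : ℝ) * _ = _
    by_cases h0 : mm σ p q = 0
    · simp [h0]
    · rw [if_pos ⟨hpq, h0⟩]
      have : (mm σ p q : ℝ) ≠ 0 := by exact_mod_cast h0
      field_simp

lemma aw_nonneg (p q r : Pt) : 0 ≤ aw σ p q r := by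
  unfold aw; split_ifs <;> positivity

lemma bw_nonneg (p q : Pt) (u : X) : 0 ≤ bw σ p q u := by
  unfold bw; split_ifs <;> positivity

open Classical in
/-- directions of ordinary lines -/
noncomputable def ordDirs (σ : Pt → Pt → X) : Finset X :=
  (Finset.univ.filter (fun e : Pt × Pt => e.1 ≠ e.2 ∧ mm σ e.1 e.2 = 0)).image (fun e => σ e.1 e.2)

open Classical in
lemma bw_sum (p q : Pt) : ∑ u : ordDirs σ, bw σ p q u = if p ≠ q ∧ mm σ p q = 0 then 3 / 2 else 0 := by
  by_cases h : p ≠ q ∧ mm σ p q = 0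
  · rw [if_pos h]
    have hu : σ p q ∈ ordDirs σ := by
      unfold ordDirs
      rw [Finset.mem_image]
      exact ⟨(p, q), by simpa using h, rfl⟩
    rw [Finset.sum_eq_single (⟨σ p q, hu⟩ : ordDirs σ)]
    · simp [bw, h]
    · intro u _ hne
      unfold bw
      rw [if_neg]
      rintro ⟨_, _, h3⟩
      exact hne (Subtype.ext h3.symm)
    · simp
  · rw [if_neg h]
    apply Finset.sum_eq_zero
    intro u _
    unfold bw
    rw [if_neg]
    tauto

lemma bw_row_le (hsymm : ∀ p q, σ p q = σ q p)
    (htri : ∀ p q r, p ≠ q → p ≠ r → q ≠ r → σ p r = σ p q → σ q r = σ p q) (p : Pt) (u : X) : ∑ q, bw σ p q u ≤ 3 / 2 := by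
  classical
  by_cases h : ∃ q, p ≠ q ∧ mm σ p q = 0 ∧ σ p q = u
  · obtain ⟨q, h1, h2, h3⟩ := h
    rw [Finset.sum_eq_single q]
    · unfold bw; split_ifs <;> norm_num
    · intro r _ hr
      unfold bw
      rw [if_neg]
      rintro ⟨g1, g2, g3⟩
      unfold mm at h2
      rw [Finset.card_eq_zero, Finset.filter_eq_empty_iff] at h2
      exact h2 (Finset.mem_univ r) ⟨g1.symm, hr, by rw [g3, h3]⟩
    · simp
  · rw [Finset.sum_eq_zero]
    · norm_num
    · intro q _
      unfold bw
      rw [if_neg]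
      intro hq; exact h ⟨q, hq⟩

/-- the row `(p,q,j)` is used -/
def Good (σ : Pt → Pt → X) : Pt × Pt × (Pt ⊕ ordDirs σ) → Prop
  | (p, q, Sum.inl r) => Col σ p q r
  | (p, q, Sum.inr u) => p ≠ q ∧ mm σ p q = 0 ∧ σ p q = u

noncomputable def tau (σ : Pt → Pt → X) : Pt × Pt × (Pt ⊕ ordDirs σ) → ℝ
  | (p, q, Sum.inl _) => 1 / (mm σ p q : ℝ)
  | (_, _, Sum.inr _) => 3 / 2

def Inc (i : Pt × Pt × (Pt ⊕ ordDirs σ)) (l : Pt ⊕ ordDirs σ) : Prop :=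
  l = Sum.inl i.1 ∨ l = Sum.inl i.2.1 ∨ l = i.2.2

open Classical in
noncomputable def WW (σ : Pt → Pt → X) (j k : Pt ⊕ ordDirs σ) : ℝ :=
  ∑ i ∈ Finset.univ.filter (Good σ), if Inc i j ∧ Inc i k then tau σ i else 0

open Classical in
lemma WW_eq (j k : Pt ⊕ ordDirs σ) : WW σ j k =
    (∑ p, ∑ q, ∑ r, if Inc (σ := σ) (p, q, Sum.inl r) j ∧ Inc (σ := σ) (p, q, Sum.inl r) k then aw σ p q r else 0) +
    ∑ p, ∑ q, ∑ u : ordDirs σ, if Inc (p, q, Sum.inr u) j ∧ Inc (p, q, Sum.inr u) k then bw σ p q u else 0 := by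
  unfold WW
  rw [Finset.sum_filter]
  simp only [Fintype.sum_prod_type, Fintype.sum_sum_type]
  rw [← Finset.sum_add_distrib]
  refine Finset.sum_congr rfl fun p _ => ?_
  rw [← Finset.sum_add_distrib]
  refine Finset.sum_congr rfl fun q _ => ?_
  congr 1
  · refine Finset.sum_congr rfl fun r _ => ?_
    simp only [Good, tau, aw]
    split_ifs <;> simp_all
  · refine Finset.sum_congr rfl fun r _ => ?_
    by_cases hg : p ≠ q ∧ mm σ p q = 0 ∧ σ p q = r
    · have hg' : Good σ (p, q, Sum.inr r) := hg
      rw [if_pos hg', bw, if_pos hg]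
      rfl
    · have hg' : ¬ Good σ (p, q, Sum.inr r) := hg
      rw [if_neg hg', bw, if_neg hg, ite_self]

lemma WW_symm (j k : Pt ⊕ ordDirs σ) : WW σ j k = WW σ k j := by
  unfold WW
  refine Finset.sum_congr rfl fun i _ => ?_
  congr 1
  exact propext and_comm

lemma WW_diag (hsymm : ∀ p q, σ p q = σ q p)
    (htri : ∀ p q r, p ≠ q → p ≠ r → q ≠ r → σ p r = σ p q → σ q r = σ p q) (x : Pt) : 3 * ((Fintype.card Pt : ℝ) - 1) ≤ WW σ (Sum.inl x) (Sum.inl x) := by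
  classical
  rw [WW_eq]
  have ha : ∑ p, ∑ q, ∑ r, ((if p = x then aw σ p q r else 0) + (if q = x then aw σ p q r else 0) +
      (if r = x then aw σ p q r else 0)) ≤ ∑ p, ∑ q, ∑ r, if Inc (σ := σ) (p, q, Sum.inl r) (Sum.inl x)
        ∧ Inc (σ := σ) (p, q, Sum.inl r) (Sum.inl x) then aw σ p q r else 0 := by
    refine Finset.sum_le_sum fun p _ => Finset.sum_le_sum fun q _ => Finset.sum_le_sum fun r _ => ?_
    by_cases hc : Col σ p q r
    · obtain ⟨h1, h2, h3, h4⟩ := hc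
      by_cases e1 : p = x
      · subst e1; simp [Inc, h1.symm, h2.symm]
      · by_cases e2 : q = x
        · subst e2; simp [Inc, h1, h3.symm]
        · by_cases e3 : r = x
          · subst e3; simp [Inc, e1, e2]
          · simp [Inc, e1, e2, e3, Ne.symm e1, Ne.symm e2, Ne.symm e3]
    · simp [aw, hc]
  have hb : ∑ p, ∑ q, ∑ u : ordDirs σ, ((if p = x then bw σ p q u else 0) + (if q = x then bw σ p q u else 0))
      ≤ ∑ p, ∑ q, ∑ u : ordDirs σ, if Inc (p, q, Sum.inr u) (Sum.inl x)
        ∧ Inc (p, q, Sum.inr u) (Sum.inl x) then bw σ p q u else 0 := by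
    refine Finset.sum_le_sum fun p _ => Finset.sum_le_sum fun q _ => Finset.sum_le_sum fun r _ => ?_
    by_cases hc : p = q
    · subst hc; simp [bw]
    · by_cases e1 : p = x
      · subst e1; simp [Inc, Ne.symm hc]
      · by_cases e2 : q = x
        · subst e2; simp [Inc, hc]
        · simp [Inc, e1, e2, Ne.symm e1, Ne.symm e2]
  refine le_trans ?_ (add_le_add ha hb)
  simp only [Finset.sum_add_distrib]
  have s1 : ∑ p, ∑ q, ∑ r, (if p = x then aw σ p q r else 0) = ∑ q, ∑ r, aw σ x q r := by
    rw [Finset.sum_eq_single x]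
    · simp
    · intro p _ hp; simp [hp]
    · simp
  have s2 : ∑ p, ∑ q, ∑ r, (if q = x then aw σ p q r else 0) = ∑ q, ∑ r, aw σ x q r := by
    refine Finset.sum_congr rfl fun p _ => ?_
    rw [Finset.sum_eq_single x]
    · simp only [if_true]
      exact Finset.sum_congr rfl fun r _ => aw_swap12 hsymm htri _ _ _
    · intro q _ hq; simp [hq]
    · simp
  have s3 : ∑ p, ∑ q, ∑ r, (if r = x then aw σ p q r else 0) = ∑ q, ∑ r, aw σ x q r := by
    refine Finset.sum_congr rfl fun p _ => Finset.sum_congr rfl fun q _ => ?_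
    rw [Finset.sum_eq_single x]
    · simp only [if_true]
      rw [aw_swap23, aw_swap12 hsymm htri]
    · intro q _ hq; simp [hq]
    · simp
  have s4 : ∑ p, ∑ q, ∑ u : ordDirs σ, (if p = x then bw σ p q u else 0) = ∑ q, ∑ u : ordDirs σ, bw σ x q u := by
    rw [Finset.sum_eq_single x]
    · simp
    · intro p _ hp; simp [hp]
    · simp
  have s5 : ∑ p, ∑ q, ∑ u : ordDirs σ, (if q = x then bw σ p q u else 0) = ∑ q, ∑ u : ordDirs σ, bw σ x q u := by
    refine Finset.sum_congr rfl fun p _ => ?_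
    rw [Finset.sum_eq_single x]
    · simp only [if_true]
      exact Finset.sum_congr rfl fun r _ => bw_symm hsymm htri _ _ _
    · intro q _ hq; simp [hq]
    · simp
  rw [s1, s2, s3, s4, s5]
  have tot : ∑ q, (3 * ∑ r, aw σ x q r + 2 * ∑ u : ordDirs σ, bw σ x q u) = ∑ q, (3 - if x = q then 3 else 0) := by
    refine Finset.sum_congr rfl fun q _ => ?_
    rw [aw_sum, bw_sum]
    by_cases h : x = q
    · simp [h]
    · by_cases h0 : mm σ x q = 0
      · simp [h, h0]; norm_num
      · simp [h, h0]
  rw [Finset.sum_add_distrib, ← Finset.mul_sum, ← Finset.mul_sum, Finset.sum_sub_distrib] at tot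
  simp only [Finset.sum_const, Finset.card_univ, nsmul_eq_mul, Finset.sum_ite_eq, Finset.mem_univ,
    if_true] at tot
  linarith

lemma WW_off (hsymm : ∀ p q, σ p q = σ q p)
    (htri : ∀ p q r, p ≠ q → p ≠ r → q ≠ r → σ p r = σ p q → σ q r = σ p q) (x y : Pt) (hxy : x ≠ y) : WW σ (Sum.inl x) (Sum.inl y) ≤ 6 := by
  classical
  rw [WW_eq]
  have pick : ∀ (f : Pt → Pt → ℝ) (a b : Pt), ∑ p, ∑ q, (if p = a ∧ q = b then f p q else 0) = f a b := by
    intro f a b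
    rw [Finset.sum_eq_single a, Finset.sum_eq_single b]
    · simp
    · intro q _ hq; simp [hq]
    · simp
    · intro p _ hp; simp [hp]
    · simp
  set α := ∑ r, aw σ x y r with hα
  have ha : (∑ p, ∑ q, ∑ r, if Inc (σ := σ) (p, q, Sum.inl r) (Sum.inl x)
        ∧ Inc (σ := σ) (p, q, Sum.inl r) (Sum.inl y) then aw σ p q r else 0) ≤ 6 * α := by
    have h1 : (∑ p, ∑ q, ∑ r, if Inc (σ := σ) (p, q, Sum.inl r) (Sum.inl x)
        ∧ Inc (σ := σ) (p, q, Sum.inl r) (Sum.inl y) then aw σ p q r else 0) ≤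
        ∑ p, ∑ q, ∑ r, ((if p = x ∧ q = y then aw σ p q r else 0) +
          (if p = y ∧ q = x then aw σ p q r else 0) + (if p = x ∧ r = y then aw σ p q r else 0) +
          (if p = y ∧ r = x then aw σ p q r else 0) + (if q = x ∧ r = y then aw σ p q r else 0) +
          (if q = y ∧ r = x then aw σ p q r else 0)) := by
      refine Finset.sum_le_sum fun p _ => Finset.sum_le_sum fun q _ => Finset.sum_le_sum fun r _ => ?_
      have hn := aw_nonneg (σ := σ) p q r
      have hz : ∀ (c : Prop) [Decidable c], 0 ≤ if c then aw σ p q r else 0 := by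
        intro c _; split_ifs <;> simp [hn]
      have z1 := hz (p = x ∧ q = y)
      have z2 := hz (p = y ∧ q = x)
      have z3 := hz (p = x ∧ r = y)
      have z4 := hz (p = y ∧ r = x)
      have z5 := hz (q = x ∧ r = y)
      have z6 := hz (q = y ∧ r = x)
      by_cases hI : Inc (σ := σ) (p, q, Sum.inl r) (Sum.inl x) ∧ Inc (σ := σ) (p, q, Sum.inl r) (Sum.inl y)
      · rw [if_pos hI]
        simp only [Inc, Sum.inl.injEq] at hI
        rcases hI with ⟨h1 | h1 | h1, h2 | h2 | h2⟩
        · exact absurd (h1.trans h2.symm) hxy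
        · rw [if_pos (⟨h1.symm, h2.symm⟩ : p = x ∧ q = y)] at z1 ⊢; linarith
        · rw [if_pos (⟨h1.symm, h2.symm⟩ : p = x ∧ r = y)] at z3 ⊢; linarith
        · rw [if_pos (⟨h2.symm, h1.symm⟩ : p = y ∧ q = x)] at z2 ⊢; linarith
        · exact absurd (h1.trans h2.symm) hxy
        · rw [if_pos (⟨h1.symm, h2.symm⟩ : q = x ∧ r = y)] at z5 ⊢; linarith
        · rw [if_pos (⟨h2.symm, h1.symm⟩ : p = y ∧ r = x)] at z4 ⊢; linarith
        · rw [if_pos (⟨h2.symm, h1.symm⟩ : q = y ∧ r = x)] at z6 ⊢; linarith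
        · exact absurd (h1.trans h2.symm) hxy
      · rw [if_neg hI]; linarith
    refine h1.trans (le_of_eq ?_)
    simp only [Finset.sum_add_distrib]
    have c3 : ∀ f : Pt → Pt → Pt → ℝ, ∑ p, ∑ q, ∑ r, f p q r = ∑ r, ∑ p, ∑ q, f p q r := by
      intro f
      rw [Finset.sum_comm]
      rw [Finset.sum_congr rfl fun q _ => Finset.sum_comm]
      rw [Finset.sum_comm]
      exact Finset.sum_congr rfl fun r _ => Finset.sum_comm
    have c2 : ∀ f : Pt → Pt → Pt → ℝ, ∑ p, ∑ q, ∑ r, f p q r = ∑ q, ∑ p, ∑ r, f p q r :=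
      fun f => Finset.sum_comm
    have k1 : ∑ p, ∑ q, ∑ r, (if p = x ∧ q = y then aw σ p q r else 0) = α := by
      rw [c3]
      exact Finset.sum_congr rfl fun r _ => pick (fun p q => aw σ p q r) x y
    have k2 : ∑ p, ∑ q, ∑ r, (if p = y ∧ q = x then aw σ p q r else 0) = α := by
      rw [c3]
      exact Finset.sum_congr rfl fun r _ => (pick (fun p q => aw σ p q r) y x).trans
        (aw_swap12 hsymm htri _ _ _)
    have k3 : ∑ p, ∑ q, ∑ r, (if p = x ∧ r = y then aw σ p q r else 0) = α := by
      rw [c2]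
      exact Finset.sum_congr rfl fun q _ => (pick (fun p r => aw σ p q r) x y).trans
        (aw_swap23 _ _ _)
    have k4 : ∑ p, ∑ q, ∑ r, (if p = y ∧ r = x then aw σ p q r else 0) = α := by
      rw [c2]
      exact Finset.sum_congr rfl fun q _ => (pick (fun p r => aw σ p q r) y x).trans
        ((aw_swap23 _ _ _).trans (aw_swap12 hsymm htri _ _ _))
    have k5 : ∑ p, ∑ q, ∑ r, (if q = x ∧ r = y then aw σ p q r else 0) = α := by
      exact Finset.sum_congr rfl fun p _ => (pick (fun q r => aw σ p q r) x y).trans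
        ((aw_swap12 hsymm htri _ _ _).trans (aw_swap23 _ _ _))
    have k6 : ∑ p, ∑ q, ∑ r, (if q = y ∧ r = x then aw σ p q r else 0) = α := by
      exact Finset.sum_congr rfl fun p _ => (pick (fun q r => aw σ p q r) y x).trans
        ((aw_swap12 hsymm htri _ _ _).trans ((aw_swap23 _ _ _).trans (aw_swap12 hsymm htri _ _ _)))
    rw [k1, k2, k3, k4, k5, k6]
    ring
  set β := ∑ u : ordDirs σ, bw σ x y u with hβ
  have hb : (∑ p, ∑ q, ∑ u : ordDirs σ, if Inc (p, q, Sum.inr u) (Sum.inl x)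
        ∧ Inc (p, q, Sum.inr u) (Sum.inl y) then bw σ p q u else 0) ≤ 2 * β := by
    have h1 : (∑ p, ∑ q, ∑ u : ordDirs σ, if Inc (p, q, Sum.inr u) (Sum.inl x)
        ∧ Inc (p, q, Sum.inr u) (Sum.inl y) then bw σ p q u else 0) ≤
        ∑ p, ∑ q, ((if p = x ∧ q = y then ∑ u : ordDirs σ, bw σ p q u else 0) +
          (if p = y ∧ q = x then ∑ u : ordDirs σ, bw σ p q u else 0)) := by
      refine Finset.sum_le_sum fun p _ => Finset.sum_le_sum fun q _ => ?_
      by_cases e1 : p = x ∧ q = y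
      · obtain ⟨rfl, rfl⟩ := e1
        simp [Inc, hxy]
      · by_cases e2 : p = y ∧ q = x
        · obtain ⟨rfl, rfl⟩ := e2
          simp [Inc, hxy]
        · rw [if_neg e1, if_neg e2, add_zero]
          apply Finset.sum_nonpos
          intro u _
          rw [if_neg]
          simp only [Inc, Sum.inl.injEq, reduceCtorEq, or_false]
          rintro ⟨h1 | h1, h2 | h2⟩
          · exact hxy (h1.trans h2.symm)
          · exact e1 ⟨h1.symm, h2.symm⟩
          · exact e2 ⟨h2.symm, h1.symm⟩
          · exact hxy (h1.trans h2.symm)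
    refine h1.trans (le_of_eq ?_)
    simp only [Finset.sum_add_distrib]
    rw [pick (fun p q => ∑ u : ordDirs σ, bw σ p q u), pick (fun p q => ∑ u : ordDirs σ, bw σ p q u)]
    rw [Finset.sum_congr rfl fun u _ => bw_symm hsymm htri y x _]
    ring
  have e1 : α = if x ≠ y ∧ mm σ x y ≠ 0 then 1 else 0 := aw_sum x y
  have e2 : β = if x ≠ y ∧ mm σ x y = 0 then 3 / 2 else 0 := bw_sum x y
  refine (add_le_add ha hb).trans ?_
  rw [e1, e2]
  by_cases h0 : mm σ x y = 0
  · simp [hxy, h0]; norm_num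
  · simp [hxy, h0]

lemma WW_pu (hsymm : ∀ p q, σ p q = σ q p)
    (htri : ∀ p q r, p ≠ q → p ≠ r → q ≠ r → σ p r = σ p q → σ q r = σ p q) (x : Pt) (u : ordDirs σ) : WW σ (Sum.inl x) (Sum.inr u) = 2 * ∑ q, bw σ x q u := by
  classical
  rw [WW_eq]
  have h0 : (∑ p, ∑ q, ∑ r, if Inc (σ := σ) (p, q, Sum.inl r) (Sum.inl x)
        ∧ Inc (σ := σ) (p, q, Sum.inl r) (Sum.inr u) then aw σ p q r else 0) = 0 := by
    refine Finset.sum_eq_zero fun p _ => Finset.sum_eq_zero fun q _ => Finset.sum_eq_zero fun r _ => ?_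
    simp [Inc]
  rw [h0, zero_add]
  have h1 : (∑ p, ∑ q, ∑ u' : ordDirs σ, if Inc (p, q, Sum.inr u') (Sum.inl x)
        ∧ Inc (p, q, Sum.inr u') (Sum.inr u) then bw σ p q u' else 0) =
      ∑ p, ∑ q, ((if p = x then bw σ p q u else 0) + (if q = x then bw σ p q u else 0)) := by
    refine Finset.sum_congr rfl fun p _ => Finset.sum_congr rfl fun q _ => ?_
    rw [Finset.sum_eq_single u]
    · by_cases hc : p = q
      · subst hc; simp [bw]
      · by_cases e1 : p = x
        · subst e1; simp [Inc, Ne.symm hc]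
        · by_cases e2 : q = x
          · subst e2; simp [Inc, hc]
          · simp [Inc, e1, e2, Ne.symm e1, Ne.symm e2]
    · intro u' _ hu'
      simp [Inc, Ne.symm hu']
    · simp
  rw [h1]
  simp only [Finset.sum_add_distrib]
  have s4 : ∑ p, ∑ q, (if p = x then bw σ p q u else 0) = ∑ q, bw σ x q u := by
    rw [Finset.sum_eq_single x]
    · simp
    · intro p _ hp; simp [hp]
    · simp
  have s5 : ∑ p, ∑ q, (if q = x then bw σ p q u else 0) = ∑ q, bw σ x q u := by
    refine Finset.sum_congr rfl fun p _ => ?_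
    simp [bw_symm hsymm htri p x]
  rw [s4, s5]; ring

lemma WW_uu (u : ordDirs σ) : WW σ (Sum.inr u) (Sum.inr u) = ∑ p, ∑ q, bw σ p q u := by
  classical
  rw [WW_eq]
  have h0 : (∑ p, ∑ q, ∑ r, if Inc (σ := σ) (p, q, Sum.inl r) (Sum.inr u)
        ∧ Inc (σ := σ) (p, q, Sum.inl r) (Sum.inr u) then aw σ p q r else 0) = 0 := by
    refine Finset.sum_eq_zero fun p _ => Finset.sum_eq_zero fun q _ => Finset.sum_eq_zero fun r _ => ?_
    simp [Inc]
  rw [h0, zero_add]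
  refine Finset.sum_congr rfl fun p _ => Finset.sum_congr rfl fun q _ => ?_
  simp [Inc]

lemma WW_uv (u u' : ordDirs σ) (h : u ≠ u') : WW σ (Sum.inr u) (Sum.inr u') = 0 := by
  classical
  rw [WW_eq]
  have h0 : (∑ p, ∑ q, ∑ r, if Inc (σ := σ) (p, q, Sum.inl r) (Sum.inr u)
        ∧ Inc (σ := σ) (p, q, Sum.inl r) (Sum.inr u') then aw σ p q r else 0) = 0 := by
    refine Finset.sum_eq_zero fun p _ => Finset.sum_eq_zero fun q _ => Finset.sum_eq_zero fun r _ => ?_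
    simp [Inc]
  rw [h0, zero_add]
  refine Finset.sum_eq_zero fun p _ => Finset.sum_eq_zero fun q _ => Finset.sum_eq_zero fun r _ => ?_
  rw [if_neg]
  simp only [Inc, reduceCtorEq, false_or, Sum.inr.injEq]
  rintro ⟨h1, h2⟩
  exact h (h1.trans h2.symm)

lemma WW_nonneg (j k : Pt ⊕ ordDirs σ) : 0 ≤ WW σ j k := by
  classical
  rw [WW_eq]
  refine add_nonneg ?_ ?_
  · refine Finset.sum_nonneg fun p _ => Finset.sum_nonneg fun q _ => Finset.sum_nonneg fun r _ => ?_
    split_ifs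
    · exact aw_nonneg _ _ _
    · exact le_rfl
  · refine Finset.sum_nonneg fun p _ => Finset.sum_nonneg fun q _ => Finset.sum_nonneg fun r _ => ?_
    split_ifs
    · exact bw_nonneg _ _ _
    · exact le_rfl

open Classical in
theorem WW_total (hsymm : ∀ p q, σ p q = σ q p)
    (htri : ∀ p q r, p ≠ q → p ≠ r → q ≠ r → σ p r = σ p q → σ q r = σ p q) (hn : 2 ≤ Fintype.card Pt) :
    9 / 4 * ∑ j, ∑ k, (if j = k then 0 else (WW σ j k)^2 / (WW σ j j * WW σ k k)) ≤
      9 * ((Fintype.card Pt : ℝ) + (ordDirs σ).card) / ((Fintype.card Pt : ℝ) - 1) := by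
  set n : ℝ := (Fintype.card Pt : ℝ) with hnn
  have hn1 : 0 < n - 1 := by
    have : (2:ℝ) ≤ n := by rw [hnn]; exact_mod_cast hn
    linarith
  have hTp : ∀ x, 3 * (n - 1) ≤ WW σ (Sum.inl x) (Sum.inl x) := WW_diag hsymm htri
  have hpp : ∀ x y : Pt, (if (Sum.inl x : Pt ⊕ ordDirs σ) = Sum.inl y then 0 else
      (WW σ (Sum.inl x) (Sum.inl y))^2 / (WW σ (Sum.inl x) (Sum.inl x) * WW σ (Sum.inl y) (Sum.inl y)))
      ≤ (4 / (n - 1)^2) * (1 - if x = y then 1 else 0) := by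
    intro x y
    by_cases hxy : x = y
    · subst hxy; simp
    · rw [if_neg (by simpa using hxy), if_neg hxy]
      have h1 := WW_off hsymm htri x y hxy
      have h2 := WW_nonneg (σ := σ) (Sum.inl x) (Sum.inl y)
      have h3 := hTp x
      have h4 := hTp y
      have h5 : (WW σ (Sum.inl x) (Sum.inl y))^2 ≤ 36 := by nlinarith
      have h6 : 9 * (n-1)^2 ≤ WW σ (Sum.inl x) (Sum.inl x) * WW σ (Sum.inl y) (Sum.inl y) := by
        nlinarith [mul_le_mul h3 h4 (by positivity) (by linarith)]
      calc _ ≤ 36 / (9 * (n-1)^2) := div_le_div₀ (by norm_num) h5 (by positivity) h6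
        _ = _ := by field_simp; norm_num
  have hpu : ∀ u : ordDirs σ, ∑ x : Pt, (WW σ (Sum.inl x) (Sum.inr u))^2 /
      (WW σ (Sum.inl x) (Sum.inl x) * WW σ (Sum.inr u) (Sum.inr u)) ≤ 2 / (n - 1) := by
    intro u
    have hT := WW_nonneg (σ := σ) (Sum.inr u) (Sum.inr u)
    rcases hT.eq_or_lt with h0 | hpos
    · rw [← h0]
      simp only [mul_zero, div_zero, Finset.sum_const_zero]
      positivity
    · have h1 : ∀ x, (WW σ (Sum.inl x) (Sum.inr u))^2 /
          (WW σ (Sum.inl x) (Sum.inl x) * WW σ (Sum.inr u) (Sum.inr u)) ≤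
          (6 * ∑ q, bw σ x q u) / (3 * (n - 1) * WW σ (Sum.inr u) (Sum.inr u)) := by
        intro x
        have e1 := WW_pu hsymm htri x u
        have e2 := bw_row_le hsymm htri x (u : X)
        have e3 : 0 ≤ ∑ q, bw σ x q u := Finset.sum_nonneg fun q _ => bw_nonneg _ _ _
        apply div_le_div₀ (by positivity)
        · rw [e1]; nlinarith
        · positivity
        · exact mul_le_mul_of_nonneg_right (hTp x) hT
      refine (Finset.sum_le_sum fun x _ => h1 x).trans (le_of_eq ?_)
      rw [← Finset.sum_div, ← Finset.mul_sum, ← WW_uu]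
      field_simp
      norm_num
  have hA : ∑ x : Pt, ∑ y : Pt, (if (Sum.inl x : Pt ⊕ ordDirs σ) = Sum.inl y then 0 else
      (WW σ (Sum.inl x) (Sum.inl y))^2 / (WW σ (Sum.inl x) (Sum.inl x) * WW σ (Sum.inl y) (Sum.inl y)))
      ≤ 4 * n / (n - 1) := by
    refine (Finset.sum_le_sum fun x _ => Finset.sum_le_sum fun y _ => hpp x y).trans (le_of_eq ?_)
    simp only [← Finset.mul_sum, Finset.sum_sub_distrib]
    simp
    rw [← hnn]
    field_simp
  have hB : ∑ x : Pt, ∑ u : ordDirs σ, (if (Sum.inl x : Pt ⊕ ordDirs σ) = Sum.inr u then 0 else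
      (WW σ (Sum.inl x) (Sum.inr u))^2 / (WW σ (Sum.inl x) (Sum.inl x) * WW σ (Sum.inr u) (Sum.inr u)))
      ≤ (ordDirs σ).card * (2 / (n - 1)) := by
    rw [Finset.sum_comm]
    have : ∀ u ∈ (Finset.univ : Finset (ordDirs σ)), ∑ x : Pt, (if (Sum.inl x : Pt ⊕ ordDirs σ) = Sum.inr u then 0 else
      (WW σ (Sum.inl x) (Sum.inr u))^2 / (WW σ (Sum.inl x) (Sum.inl x) * WW σ (Sum.inr u) (Sum.inr u)))
      ≤ 2 / (n - 1) := by
      intro u _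
      simpa using hpu u
    have h2 := Finset.sum_le_card_nsmul _ _ _ this
    simpa using h2
  have hC : ∑ u : ordDirs σ, ∑ x : Pt, (if (Sum.inr u : Pt ⊕ ordDirs σ) = Sum.inl x then 0 else
      (WW σ (Sum.inr u) (Sum.inl x))^2 / (WW σ (Sum.inr u) (Sum.inr u) * WW σ (Sum.inl x) (Sum.inl x)))
      ≤ (ordDirs σ).card * (2 / (n - 1)) := by
    rw [Finset.sum_comm]
    refine le_trans (le_of_eq ?_) hB
    refine Finset.sum_congr rfl fun x _ => Finset.sum_congr rfl fun u _ => ?_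
    simp only [reduceCtorEq, if_false]
    rw [WW_symm (Sum.inr u) (Sum.inl x), mul_comm]
  have hD : ∑ u : ordDirs σ, ∑ v : ordDirs σ, (if (Sum.inr u : Pt ⊕ ordDirs σ) = Sum.inr v then 0 else
      (WW σ (Sum.inr u) (Sum.inr v))^2 / (WW σ (Sum.inr u) (Sum.inr u) * WW σ (Sum.inr v) (Sum.inr v)))
      = 0 := by
    refine Finset.sum_eq_zero fun u _ => Finset.sum_eq_zero fun v _ => ?_
    by_cases h : u = v
    · simp [h]
    · rw [WW_uv u v h]; simp
  simp only [Fintype.sum_sum_type, Finset.sum_add_distrib]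
  have : 9 * (n + (ordDirs σ).card) / (n - 1) = 9 / 4 * ((4 * n / (n - 1) + (ordDirs σ).card * (2 / (n - 1))) +
      ((ordDirs σ).card * (2 / (n - 1)) + 0)) := by
    field_simp; ring
  rw [this]
  linarith

end Comb
end DirBound

namespace DirBound

section Geom

open Classical in
lemma row3 {J : Type*} [Fintype J] (a b c : J) (hab : a ≠ b) (hac : a ≠ c) (hbc : b ≠ c) (x y z : ℝ)
    (hx : x ≠ 0) (hy : y ≠ 0) (hz : z ≠ 0) :
    ∃ A : J → ℝ, (∀ l, A l ≠ 0 ↔ l = a ∨ l = b ∨ l = c) ∧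
      (Finset.univ.filter (fun l => A l ≠ 0)).card = 3 ∧
      ∀ f : J → ℝ, ∑ l, A l * f l = x * f a + y * f b + z * f c := by
  have h1 : ∀ l, (Pi.single a x + Pi.single b y + Pi.single c z : J → ℝ) l ≠ 0 ↔
      l = a ∨ l = b ∨ l = c := by
    intro l
    by_cases ha : l = a
    · subst ha; simp [hab, hac, hx]
    · by_cases hb : l = b
      · subst hb; simp [ha, hbc, hy]
      · by_cases hc : l = c
        · subst hc; simp [ha, hb, hz]
        · simp [ha, hb, hc]
  refine ⟨Pi.single a x + Pi.single b y + Pi.single c z, h1, ?_, ?_⟩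
  · rw [Finset.filter_congr (fun l _ => h1 l)]
    rw [← Finset.card_eq_three.mpr ⟨a, b, c, hab, hac, hbc, rfl⟩]
    congr 1
    ext l; simp
  · intro f
    simp only [Pi.add_apply, add_mul, Finset.sum_add_distrib, Pi.single_apply, ite_mul, zero_mul,
      Finset.sum_ite_eq', Finset.sum_ite_eq, Finset.mem_univ, if_true]

variable {E : Type*} [AddCommGroup E] [Module ℝ E]

lemma span_eq_of_mem {x y : E} (hy : y ≠ 0) (h : y ∈ Submodule.span ℝ {x}) :
    Submodule.span ℝ {y} = Submodule.span ℝ {x} := by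
  obtain ⟨t, rfl⟩ := Submodule.mem_span_singleton.mp h
  have ht : t ≠ 0 := by rintro rfl; simp at hy
  exact Submodule.span_singleton_smul_eq (IsUnit.mk0 t ht) x

variable {Pt : Type*} [Fintype Pt]

/-- direction of the line through two points -/
def dirOf (v : Pt → E) (p q : Pt) : Submodule ℝ E := Submodule.span ℝ {v q - v p}

lemma dirOf_symm (v : Pt → E) (p q : Pt) : dirOf v p q = dirOf v q p := by
  unfold dirOf
  rw [← Submodule.span_singleton_smul_eq (R := ℝ) (r := -1) (by norm_num) (v q - v p)]
  congr 2
  module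

lemma dirOf_tri {v : Pt → E} (hv : Function.Injective v) (p q r : Pt) (_ : p ≠ q) (_ : p ≠ r)
    (hqr : q ≠ r) (h : dirOf v p r = dirOf v p q) : dirOf v q r = dirOf v p q := by
  unfold dirOf at *
  apply span_eq_of_mem
  · exact sub_ne_zero.mpr (fun e => hqr (hv e).symm)
  · have h1 : v r - v p ∈ Submodule.span ℝ {v q - v p} := by
      rw [← h]; exact Submodule.mem_span_singleton_self _
    have h2 := Submodule.sub_mem _ h1 (Submodule.mem_span_singleton_self (v q - v p))
    simpa using h2

lemma mm_le {X : Type*} (σ : Pt → Pt → X) (p q : Pt) : mm σ p q ≤ Fintype.card Pt := by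
  unfold mm
  exact Finset.card_le_univ _

lemma mm_ne_zero {X : Type*} {σ : Pt → Pt → X} {p q r : Pt} (h : Col σ p q r) : mm σ p q ≠ 0 := by
  classical
  obtain ⟨h1, h2, h3, h4⟩ := h
  unfold mm
  rw [Finset.card_ne_zero]
  exact ⟨r, by simp [h2.symm, h3.symm, h4]⟩

lemma exists_row {X : Type*} (σ : Pt → Pt → X) (p q : Pt) (hpq : p ≠ q) :
    ∃ i, Good σ i ∧ Inc i (Sum.inl p) ∧ Inc i (Sum.inl q) := by
  classical
  by_cases h0 : mm σ p q = 0
  · have hu : σ p q ∈ ordDirs σ := by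
      unfold ordDirs
      rw [Finset.mem_image]
      exact ⟨(p, q), by simp [hpq, h0], rfl⟩
    exact ⟨(p, q, Sum.inr ⟨_, hu⟩), ⟨hpq, h0, rfl⟩, Or.inl rfl, Or.inr (Or.inl rfl)⟩
  · have h1 : mm σ p q ≠ 0 := h0
    unfold mm at h1
    rw [Finset.card_ne_zero] at h1
    obtain ⟨r, hr⟩ := h1
    simp only [Finset.mem_filter, Finset.mem_univ, true_and] at hr
    exact ⟨(p, q, Sum.inl r), ⟨hpq, hr.1.symm, hr.2.1.symm, hr.2.2⟩, Or.inl rfl, Or.inr (Or.inl rfl)⟩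

/-- affine functionals restricted to the points and to the ordinary directions -/
noncomputable def evalMap {U : Type*} (v : Pt → E) (w : U → E) :
    (Module.Dual ℝ E × ℝ) →ₗ[ℝ] (Pt ⊕ U → ℝ) where
  toFun x := Sum.elim (fun p => x.1 (v p) + x.2) (fun u => x.1 (w u))
  map_add' x y := by
    ext (p | u)
    · simp; ring
    · simp
  map_smul' c x := by
    ext (p | u)
    · simp; ring
    · simp

lemma evalMap_inj {U : Type*} (v : Pt → E) (w : U → E) [Nonempty Pt]
    (hs : vectorSpan ℝ (Set.range v) = ⊤) : Function.Injective (evalMap v w) := by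
  rw [← LinearMap.ker_eq_bot, LinearMap.ker_eq_bot']
  rintro ⟨φ, c⟩ h
  have h1 : ∀ p, φ (v p) + c = 0 := fun p => congrFun h (Sum.inl p)
  have h2 : φ = 0 := by
    rw [← LinearMap.ker_eq_top, eq_top_iff, ← hs, vectorSpan_def, Submodule.span_le]
    rintro x hx
    rw [Set.mem_vsub] at hx
    obtain ⟨_, ⟨p, rfl⟩, _, ⟨q, rfl⟩, rfl⟩ := hx
    simp only [vsub_eq_sub, SetLike.mem_coe, LinearMap.mem_ker, map_sub]
    linarith [h1 p, h1 q]
  subst h2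
  obtain ⟨p⟩ := ‹Nonempty Pt›
  have := h1 p
  simp at this
  simp [this]

theorem large_bound [FiniteDimensional ℝ E] {v : Pt → E} (hv : Function.Injective v)
    (hn : 2 ≤ Fintype.card Pt) (hs : vectorSpan ℝ (Set.range v) = ⊤) :
    (Module.finrank ℝ E : ℝ) + 1 ≤
      9 * ((Fintype.card Pt : ℝ) + (ordDirs (dirOf v)).card) / ((Fintype.card Pt : ℝ) - 1) := by
  classical
  set σ := dirOf v with hσ
  have hsymm : ∀ p q, σ p q = σ q p := dirOf_symm v
  have htri := dirOf_tri hv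
  rw [← hσ] at htri
  have hex : ∀ u : ordDirs σ, ∃ e : Pt × Pt, e.1 ≠ e.2 ∧ mm σ e.1 e.2 = 0 ∧ σ e.1 e.2 = u := by
    rintro ⟨u, hu⟩
    unfold ordDirs at hu
    rw [Finset.mem_image] at hu
    obtain ⟨e, he, rfl⟩ := hu
    simp only [Finset.mem_filter, Finset.mem_univ, true_and] at he
    exact ⟨e, he.1, he.2, rfl⟩
  choose e he1 he2 he3 using hex
  let w : ordDirs σ → E := fun u => v (e u).2 - v (e u).1
  have hw : ∀ u, Submodule.span ℝ {w u} = (u : Submodule ℝ E) := fun u => he3 u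
  have : Nontrivial Pt := Fintype.one_lt_card_iff_nontrivial.mp (by omega)
  let K : Submodule ℝ (Pt ⊕ ordDirs σ → ℝ) := LinearMap.range (evalMap v w)
  have hrow : ∀ i, ∃ A : Pt ⊕ ordDirs σ → ℝ, Good σ i → (∀ l, A l ≠ 0 ↔ Inc i l) ∧
      (Finset.univ.filter (fun l => A l ≠ 0)).card = 3 ∧ ∀ f ∈ K, ∑ l, A l * f l = 0 := by
    rintro ⟨p, q, r | u⟩
    · by_cases hg : Good σ (p, q, Sum.inl r)
      swap
      · exact ⟨0, fun h => absurd h hg⟩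
      obtain ⟨h1, h2, h3, h4⟩ := hg
      have h5 : v r - v p ∈ Submodule.span ℝ {v q - v p} := by
        have : v r - v p ∈ σ p r := Submodule.mem_span_singleton_self _
        rw [h4] at this; exact this
      obtain ⟨t, ht⟩ := Submodule.mem_span_singleton.mp h5
      have ht0 : t ≠ 0 := by
        rintro rfl
        rw [zero_smul] at ht
        exact h2 (hv (sub_eq_zero.mp ht.symm)).symm
      have ht1 : t - 1 ≠ 0 := by
        intro h
        have : t = 1 := by linarith
        rw [this, one_smul] at ht
        exact h3 (hv (sub_left_injective ht))
      obtain ⟨A, hA1, hA2, hA3⟩ := row3 (Sum.inl p : Pt ⊕ ordDirs σ) (Sum.inl q) (Sum.inl r)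
        (by simpa using h1) (by simpa using h2) (by simpa using h3) (t - 1) (-t) 1 ht1
        (neg_ne_zero.mpr ht0) one_ne_zero
      refine ⟨A, fun _ => ⟨hA1, hA2, ?_⟩⟩
      rintro f ⟨⟨φ, c⟩, rfl⟩
      rw [hA3]
      have := congrArg φ ht
      simp only [map_smul, map_sub, smul_eq_mul] at this
      simp only [evalMap, LinearMap.coe_mk, AddHom.coe_mk, Sum.elim_inl]
      linarith
    · by_cases hg : Good σ (p, q, Sum.inr u)
      swap
      · exact ⟨0, fun h => absurd h hg⟩
      obtain ⟨h1, h2, h3⟩ := hg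
      have h5 : v q - v p ∈ Submodule.span ℝ {w u} := by
        have : v q - v p ∈ σ p q := Submodule.mem_span_singleton_self _
        rw [h3, ← hw u] at this; exact this
      obtain ⟨t, ht⟩ := Submodule.mem_span_singleton.mp h5
      have ht0 : t ≠ 0 := by
        rintro rfl
        rw [zero_smul] at ht
        exact h1 (hv (sub_eq_zero.mp ht.symm)).symm
      obtain ⟨A, hA1, hA2, hA3⟩ := row3 (Sum.inl p : Pt ⊕ ordDirs σ) (Sum.inl q) (Sum.inr u)
        (by simpa using h1) (by simp) (by simp) (-1) 1 (-t) (by norm_num) one_ne_zero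
        (neg_ne_zero.mpr ht0)
      refine ⟨A, fun _ => ⟨hA1, hA2, ?_⟩⟩
      rintro f ⟨⟨φ, c⟩, rfl⟩
      rw [hA3]
      have := congrArg φ ht
      simp only [map_smul, map_sub, smul_eq_mul] at this
      simp only [evalMap, LinearMap.coe_mk, AddHom.coe_mk, Sum.elim_inl, Sum.elim_inr]
      linarith
  choose A hA using hrow
  set R := Finset.univ.filter (Good σ) with hR
  have hRm : ∀ i, i ∈ R ↔ Good σ i := by intro i; simp [hR]
  have hδ : (0:ℝ) < 1 / (Fintype.card Pt + 1) := by positivity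
  have hWt : ∀ j k, Wt R A (tau σ) j k = WW σ j k := by
    intro j k
    unfold Wt WW
    refine Finset.sum_congr rfl fun i hi => ?_
    have := (hA i ((hRm i).mp hi)).1
    exact if_congr (and_congr (this j) (this k)) rfl rfl
  obtain ⟨p0, q0, hpq0⟩ := exists_pair_ne Pt
  have key := design_bound R A (tau σ) _ hδ ?_ ?_ (Sum.inl p0) ?_ K ?_
  · have hfr : Module.finrank ℝ K = Module.finrank ℝ E + 1 := by
      rw [LinearMap.finrank_range_of_inj (evalMap_inj v w hs), Module.finrank_prod,
        Subspace.dual_finrank_eq, Module.finrank_self]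
    rw [hfr] at key
    simp only [hWt] at key
    push_cast at key
    refine key.trans (le_trans (le_of_eq ?_) (WW_total hsymm htri hn))
    rfl
  · rintro ⟨p, q, r | u⟩ hi
    · have hg : Col σ p q r := (hRm _).mp hi
      have h1 := mm_ne_zero hg
      have h2 := mm_le σ p q
      simp only [tau]
      apply one_div_le_one_div_of_le
      · exact_mod_cast Nat.pos_of_ne_zero h1
      · exact_mod_cast h2.trans (Nat.le_succ _)
    · simp only [tau]
      have : (0:ℝ) ≤ Fintype.card Pt := by positivity
      rw [div_le_iff₀ (by positivity)]
      linarith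
  · intro i hi
    exact (hA i ((hRm i).mp hi)).2.1
  · have pairrow : ∀ p q : Pt, p ≠ q → ∃ i ∈ R, A i (Sum.inl p) ≠ 0 ∧ A i (Sum.inl q) ≠ 0 := by
      intro p q hpq
      obtain ⟨i, h1, h2, h3⟩ := exists_row σ p q hpq
      have := (hA i h1).1
      exact ⟨i, (hRm i).mpr h1, (this _).mpr h2, (this _).mpr h3⟩
    rintro (p | u)
    · by_cases h : p = p0
      · subst h
        exact ⟨Sum.inl q0, pairrow _ _ hpq0, pairrow _ _ hpq0.symm⟩
      · obtain ⟨i, hi, h1, h2⟩ := pairrow p p0 h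
        exact ⟨Sum.inl p0, ⟨i, hi, h1, h2⟩, ⟨i, hi, h2, h2⟩⟩
    · have hg : Good σ ((e u).1, (e u).2, Sum.inr u) := ⟨he1 u, he2 u, he3 u⟩
      have hi := (hA _ hg).1
      refine ⟨Sum.inl (e u).1, ⟨_, (hRm _).mpr hg, (hi _).mpr (Or.inr (Or.inr rfl)),
        (hi _).mpr (Or.inl rfl)⟩, ?_⟩
      by_cases h : (e u).1 = p0
      · rw [h]
        obtain ⟨i, hi, h1, h2⟩ := pairrow _ _ hpq0
        exact ⟨i, hi, h1, h1⟩
      · exact pairrow _ _ h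
  · intro f hf i hi
    exact (hA i ((hRm i).mp hi)).2.2 f hf

theorem small_bound [FiniteDimensional ℝ E] {v : Pt → E} (hv : Function.Injective v)
    (hd : 2 ≤ Module.finrank ℝ E) (hs : vectorSpan ℝ (Set.range v) = ⊤)
    (S : Finset (Pt × Pt)) (hS : ∀ p q, p ≠ q → ∃ e ∈ S, dirOf v e.1 e.2 = dirOf v p q) :
    Fintype.card Pt ≤ 3 * S.card + 1 := by
  classical
  obtain ⟨φ, hφ⟩ := Module.exists_dual_forall_apply_ne_zero (K := ℝ)
    (fun e : {e : Pt × Pt // e.1 ≠ e.2} => v e.1.1 - v e.1.2)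
    (fun e => sub_ne_zero.mpr (fun h => e.2 (hv h)))
  have hφ' : ∀ p q, p ≠ q → φ (v p) - φ (v q) ≠ 0 := by
    intro p q h
    simpa using hφ ⟨(p, q), h⟩
  have hα : Function.Injective (fun p => φ (v p)) := by
    intro p q h
    by_contra hne
    exact hφ' p q hne (by simpa [sub_eq_zero] using h)
  have hψ : ∃ ψ : Module.Dual ℝ E, ∀ s : ℝ, ψ ≠ s • φ := by
    by_contra hcon
    push Not at hcon
    have : Module.finrank ℝ (Module.Dual ℝ E) ≤ 1 :=
      finrank_le_one φ (fun ψ => by obtain ⟨s, hs⟩ := hcon ψ; exact ⟨s, hs.symm⟩)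
    rw [Subspace.dual_finrank_eq] at this
    omega
  obtain ⟨ψ, hψ⟩ := hψ
  have key := kinetic (α := fun p => φ (v p)) (β := fun p => ψ (v p)) hα
    (S.image (fun e => ct (fun p => φ (v p)) (fun p => ψ (v p)) e.1 e.2)) ?_ ?_
  · refine key.trans ?_
    have := Finset.card_image_le (s := S)
      (f := (fun e => ct (fun p => φ (v p)) (fun p => ψ (v p)) e.1 e.2))
    omega
  · intro p q hpq
    obtain ⟨e, he, hes⟩ := hS p q hpq
    rw [Finset.mem_image]
    refine ⟨e, he, ?_⟩
    have h1 : v q - v p ∈ Submodule.span ℝ {v e.2 - v e.1} := by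
      have : v q - v p ∈ dirOf v p q := Submodule.mem_span_singleton_self _
      rw [← hes] at this; exact this
    obtain ⟨t, ht⟩ := Submodule.mem_span_singleton.mp h1
    have e1 := congrArg φ ht
    have e2 := congrArg ψ ht
    simp only [map_smul, map_sub, smul_eq_mul] at e1 e2
    have hne := hφ' p q hpq
    have ht0 : t ≠ 0 := by
      rintro rfl
      apply hne; linarith
    have hne2 : φ (v e.1) - φ (v e.2) ≠ 0 := by
      intro h
      apply hne
      have : φ (v e.2) - φ (v e.1) = 0 := by linarith
      rw [this, mul_zero] at e1
      linarith
    unfold ct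
    rw [div_eq_div_iff hne2 hne]
    have e1' : φ (v p) - φ (v q) = t * (φ (v e.1) - φ (v e.2)) := by linarith
    have e2' : ψ (v p) - ψ (v q) = t * (ψ (v e.1) - ψ (v e.2)) := by linarith
    rw [e1', e2']; ring
  · intro s
    by_contra hcon
    push Not at hcon
    apply hψ s
    rw [← sub_eq_zero, ← LinearMap.ker_eq_top, eq_top_iff, ← hs, vectorSpan_def, Submodule.span_le]
    rintro x hx
    rw [Set.mem_vsub] at hx
    obtain ⟨_, ⟨p, rfl⟩, _, ⟨q, rfl⟩, rfl⟩ := hx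
    have := hcon p q
    simp only [vsub_eq_sub, SetLike.mem_coe, LinearMap.mem_ker, map_sub, LinearMap.sub_apply,
      LinearMap.smul_apply, smul_eq_mul]
    linarith

end Geom
end DirBound

/-- **Theorem 1.2** (with explicit constant `b = 1/48`).
For every integer `d ≥ 2`, any finite set `P` of `n` points in `ℝ^d` whose affine
span is all of `ℝ^d` determines at least `(1/48)·d·n` lines with pairwise distinct
directions: there is a finite set `S` of at least `d·n/48` ordered pairs of distinct
points of `P` whose difference vectors are pairwise non-parallel. -/
theorem distinct_directions_lower_bound (d n : ℕ) (hd : 2 ≤ d)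
    (P : Finset (Fin d → ℝ)) (hcard : P.card = n)
    (hspan : affineSpan ℝ (P : Set (Fin d → ℝ)) = ⊤) :
    ∃ S : Finset ((Fin d → ℝ) × (Fin d → ℝ)),
      d * n ≤ 48 * S.card ∧
      (∀ e ∈ S, e.1 ∈ P ∧ e.2 ∈ P ∧ e.1 ≠ e.2) ∧
      (∀ e₁ ∈ S, ∀ e₂ ∈ S, e₁ ≠ e₂ →
        ∀ c : ℝ, e₂.2 - e₂.1 ≠ c • (e₁.2 - e₁.1)) := by
  classical
  let v : P → (Fin d → ℝ) := Subtype.val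
  have hv : Function.Injective v := Subtype.val_injective
  have hcP : Fintype.card P = n := by rw [Fintype.card_coe, hcard]
  have hrange : Set.range v = (P : Set (Fin d → ℝ)) := Subtype.range_coe
  have hs : vectorSpan ℝ (Set.range v) = ⊤ := by
    rw [hrange, ← direction_affineSpan, hspan, AffineSubspace.direction_top]
  have hfr : Module.finrank ℝ (Fin d → ℝ) = d := by simp
  have hne : 1 ≤ n := by
    by_contra h
    have h0 : n = 0 := by omega
    rw [h0, Finset.card_eq_zero] at hcard
    rw [hcard] at hspan
    simp at hspan
  have hnd : d + 1 ≤ n := by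
    obtain ⟨m, hm⟩ : ∃ m, n = m + 1 := ⟨n - 1, by omega⟩
    have := finrank_vectorSpan_range_le ℝ v (hcP.trans hm)
    rw [hs, finrank_top, hfr] at this
    omega
  let dir : P × P → Submodule ℝ (Fin d → ℝ) := fun e => DirBound.dirOf v e.1 e.2
  let Q : Finset (P × P) := Finset.univ.filter (fun e => e.1 ≠ e.2)
  obtain ⟨S, hSQ, hSinj, hSim⟩ := Finset.exists_subset_injOn_image_eq_of_surjOn (f := dir)
    (Q : Set (P × P)) (Q.image dir) (by
      intro x hx
      rw [Finset.coe_image] at hx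
      exact hx)
  have hScard : (Q.image dir).card = S.card := by
    rw [← hSim, Finset.card_image_of_injOn hSinj]
  have hSQ' : ∀ e ∈ S, e.1 ≠ e.2 := by
    intro e he
    have := hSQ he
    simpa [Q] using this
  have hSdir : ∀ p q, p ≠ q → ∃ e ∈ S, DirBound.dirOf v e.1 e.2 = DirBound.dirOf v p q := by
    intro p q hpq
    have : dir (p, q) ∈ S.image dir := by
      rw [hSim]
      exact Finset.mem_image_of_mem _ (by simpa [Q] using hpq)
    rw [Finset.mem_image] at this
    exact this
  have hord : (DirBound.ordDirs (DirBound.dirOf v)).card ≤ S.card := by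
    rw [← hScard]
    apply Finset.card_le_card
    intro u hu
    unfold DirBound.ordDirs at hu
    rw [Finset.mem_image] at hu ⊢
    obtain ⟨e, he, rfl⟩ := hu
    simp only [Finset.mem_filter, Finset.mem_univ, true_and] at he
    exact ⟨e, by simpa [Q] using he.1, rfl⟩
  have hbound : d * n ≤ 48 * S.card := by
    by_cases hd12 : d ≤ 12
    · have h := DirBound.small_bound hv (by rw [hfr]; exact hd) hs S hSdir
      rw [hcP] at h
      have h2 : d * n ≤ 12 * n := Nat.mul_le_mul_right n hd12
      omega
    · have h := DirBound.large_bound hv (by omega) hs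
      rw [hfr, hcP] at h
      have hn3 : (13:ℝ) + 1 ≤ n := by
        have : 13 + 1 ≤ n := by omega
        exact_mod_cast this
      have hd13 : (13:ℝ) ≤ d := by
        have : 13 ≤ d := by omega
        exact_mod_cast this
      have hnd' : (d:ℝ) + 1 ≤ n := by exact_mod_cast hnd
      have hord' : ((DirBound.ordDirs (DirBound.dirOf v)).card : ℝ) ≤ S.card := by
        exact_mod_cast hord
      rw [le_div_iff₀ (by linarith)] at h
      have h3 : (d:ℝ) * n ≤ 48 * S.card := by nlinarith
      exact_mod_cast h3
  refine ⟨S.image (Prod.map v v), ?_, ?_, ?_⟩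
  · rw [Finset.card_image_of_injective _ (Function.Injective.prodMap hv hv)]
    exact hbound
  · intro e he
    rw [Finset.mem_image] at he
    obtain ⟨⟨p, q⟩, hpq, rfl⟩ := he
    exact ⟨p.2, q.2, fun h => hSQ' _ hpq (hv h)⟩
  · intro e₁ he₁ e₂ he₂ hne12 c hc
    rw [Finset.mem_image] at he₁ he₂
    obtain ⟨a, ha, rfl⟩ := he₁
    obtain ⟨b, hb, rfl⟩ := he₂
    apply hne12
    congr 1
    refine (hSinj hb ha ?_).symm
    refine DirBound.span_eq_of_mem (sub_ne_zero.mpr (fun h => hSQ' b hb (hv h).symm)) ?_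
    exact Submodule.mem_span_singleton.mpr ⟨c, hc.symm⟩
end

section
/- For every integer d ≥ 2 and every finite set P of n points in ℝ^d whose affine span is all of ℝ^d, P determines at least (1/48)·d·n closed line segments (each with both endpoints in P) no two of which are convergent and no two of which are collinear. -/
/-- Two closed line segments in `ℝ^d` are *convergent* if they are two opposite
edges of a convex 2-dimensional quadrilateral: there are four distinct coplanar
points `a, b, c, e`, no one of which lies in the convex hull of the other three,
occurring in this cyclic order on the convex quadrilateral (equivalently, the
diagonals `[a,c]` and `[b,e]` meet), such that one segment is `[a,b]` and the
other is `[c,e]`. -/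
def Convergent {d : ℕ} (s t : Set (Fin d → ℝ)) : Prop :=
  ∃ a b c e : Fin d → ℝ,
    a ≠ b ∧ a ≠ c ∧ a ≠ e ∧ b ≠ c ∧ b ≠ e ∧ c ≠ e ∧
    Coplanar ℝ ({a, b, c, e} : Set (Fin d → ℝ)) ∧
    a ∉ convexHull ℝ ({b, c, e} : Set (Fin d → ℝ)) ∧
    b ∉ convexHull ℝ ({a, c, e} : Set (Fin d → ℝ)) ∧
    c ∉ convexHull ℝ ({a, b, e} : Set (Fin d → ℝ)) ∧
    e ∉ convexHull ℝ ({a, b, c} : Set (Fin d → ℝ)) ∧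
    (segment ℝ a c ∩ segment ℝ b e).Nonempty ∧
    ((s = segment ℝ a b ∧ t = segment ℝ c e) ∨
      (s = segment ℝ c e ∧ t = segment ℝ a b))

def homog {d : ℕ} (x : Fin d → ℝ) : (Fin d → ℝ) × ℝ := (x, 1)

lemma endpoint_of_segment_eq {d : ℕ} {a b q x : Fin d → ℝ}
    (h : segment ℝ q x = segment ℝ a b) : q = a ∨ q = b := by
  have ha : a ∈ segment ℝ q x := h ▸ left_mem_segment ℝ a b
  have hb : b ∈ segment ℝ q x := h ▸ right_mem_segment ℝ a b
  have hq : q ∈ segment ℝ a b := h ▸ left_mem_segment ℝ q x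
  rw [segment_eq_image'] at ha hb hq
  obtain ⟨s, ⟨hs0, hs1⟩, rfl⟩ := ha
  obtain ⟨t, ⟨ht0, ht1⟩, rfl⟩ := hb
  obtain ⟨r, ⟨hr0, hr1⟩, hr⟩ := hq
  simp only at hr
  have h1 : ((1 - r) * s + r * t) • (x - q) = 0 := by
    have h2 : ((1 - r) * s + r * t) • (x - q)
        = (q + s • (x - q) + r • (q + t • (x - q) - (q + s • (x - q)))) - q := by
      module
    rw [h2, hr, sub_self]
  rcases smul_eq_zero.1 h1 with h2 | h2
  · have e1 : 0 ≤ (1 - r) * s := mul_nonneg (by linarith) hs0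
    have e2 : 0 ≤ r * t := mul_nonneg hr0 ht0
    have e3 : r * t = 0 := by linarith
    have e4 : (1 - r) * s = 0 := by linarith
    rcases mul_eq_zero.1 e3 with e3 | e3
    · subst e3
      left
      have : s = 0 := by linarith
      simp [this]
    · right; simp [e3]
  · left; simp [h2]

lemma affineIndependent_of_homog {d : ℕ} (T : Finset (Fin d → ℝ))
    (hT : LinearIndepOn ℝ homog (T : Set (Fin d → ℝ))) :
    AffineIndependent ℝ ((↑) : T → (Fin d → ℝ)) := by
  rw [affineIndependent_iff]
  intro s w hw0 hw1 i hi
  have := linearIndependent_iff'.1 hT s w ?_ i hi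
  · exact this
  · ext1
    · simpa [homog, Prod.fst_sum] using hw1
    · simpa [homog, Prod.snd_sum] using hw0

lemma card_le_of_homog {d : ℕ} (T : Finset (Fin d → ℝ)) (s : Set (Fin d → ℝ))
    (hT : LinearIndepOn ℝ homog (T : Set (Fin d → ℝ))) (hTs : (T : Set (Fin d → ℝ)) ⊆ s) :
    T.card ≤ Module.finrank ℝ (vectorSpan ℝ s) + 1 := by
  rcases Nat.eq_zero_or_pos T.card with h0 | h0
  · omega
  have h := affineIndependent_of_homog T hT
  have h1 := h.finrank_vectorSpan (n := T.card - 1) (by simp; omega)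
  have h2 : vectorSpan ℝ (Set.range ((↑) : T → (Fin d → ℝ))) ≤ vectorSpan ℝ s := by
    apply vectorSpan_mono
    simpa using hTs
  have := Submodule.finrank_mono h2
  omega

lemma star_segments {d : ℕ} (Q A : Finset (Fin d → ℝ)) (hQA : Disjoint Q A)
    (hind : ∀ a ∈ A, ∀ b ∈ A, LinearIndepOn ℝ homog ((Q : Set (Fin d → ℝ)) ∪ {a, b})) :
    ∀ e₁ ∈ Q ×ˢ A, ∀ e₂ ∈ Q ×ˢ A, e₁ ≠ e₂ →
        ¬ Convergent (segment ℝ e₁.1 e₁.2) (segment ℝ e₂.1 e₂.2) ∧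
        ¬ Collinear ℝ (segment ℝ e₁.1 e₁.2 ∪ segment ℝ e₂.1 e₂.2) := by
  classical
  rintro ⟨q, x⟩ h1 ⟨q', x'⟩ h2 hne
  simp only [Finset.mem_product] at h1 h2
  obtain ⟨hq, hx⟩ := h1
  obtain ⟨hq', hx'⟩ := h2
  have hdis : ∀ y ∈ Q, ∀ z ∈ A, y ≠ z := fun y hy z hz h =>
    (Finset.disjoint_left.1 hQA hy) (h ▸ hz)
  have hI : LinearIndepOn ℝ homog (({q, x, q', x'} : Finset (Fin d → ℝ)) : Set (Fin d → ℝ)) := by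
    apply (hind x hx x' hx').mono
    intro y hy
    simp at hy
    rcases hy with rfl | rfl | rfl | rfl <;> simp [*]
  have n1 := hdis q hq x hx
  have n2 := hdis q hq x' hx'
  have n3 := hdis q' hq' x hx
  have n4 := hdis q' hq' x' hx'
  have hne' : q ≠ q' ∨ x ≠ x' := by
    by_contra! h
    exact hne (by rw [h.1, h.2])
  constructor
  · have key : ∀ a b c e : Fin d → ℝ, a ≠ c → a ≠ e → b ≠ c → b ≠ e →
        Coplanar ℝ ({a, b, c, e} : Set (Fin d → ℝ)) →
        segment ℝ q x = segment ℝ a b → segment ℝ q' x' = segment ℝ c e → False := by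
      intro a b c e m1 m2 m3 m4 hcop s1 s2
      have k1 := endpoint_of_segment_eq s1
      have k2 := endpoint_of_segment_eq ((segment_symm ℝ x q).trans s1)
      have k3 := endpoint_of_segment_eq s2
      have k4 := endpoint_of_segment_eq ((segment_symm ℝ x' q').trans s2)
      have l1 : q ≠ q' := by
        rintro rfl
        rcases k1 with rfl | rfl <;> rcases k3 with rfl | rfl <;> contradiction
      have l2 : x ≠ x' := by
        rintro rfl
        rcases k2 with rfl | rfl <;> rcases k4 with rfl | rfl <;> contradiction
      have hc4 : ({q, x, q', x'} : Finset (Fin d → ℝ)).card = 4 := by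
        rw [Finset.card_insert_of_notMem, Finset.card_insert_of_notMem,
          Finset.card_insert_of_notMem, Finset.card_singleton] <;> simp [*, n3.symm]
      have := card_le_of_homog _ {a, b, c, e} hI (by
        intro y hy
        simp at hy
        simp only [Set.mem_insert_iff, Set.mem_singleton_iff]
        rcases hy with h | h | h | h <;> rw [h]
        · exact k1.elim Or.inl (fun h => Or.inr (Or.inl h))
        · exact k2.elim Or.inl (fun h => Or.inr (Or.inl h))
        · exact k3.elim (fun h => Or.inr (Or.inr (Or.inl h)))
            (fun h => Or.inr (Or.inr (Or.inr h)))
        · exact k4.elim (fun h => Or.inr (Or.inr (Or.inl h)))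
            (fun h => Or.inr (Or.inr (Or.inr h))))
      have h3 := coplanar_iff_finrank_le_two.1 hcop
      omega
    rintro ⟨a, b, c, e, -, m1, m2, m3, m4, -, hcop, -, -, -, -, -, ⟨s1, s2⟩ | ⟨s1, s2⟩⟩
    · exact key a b c e m1 m2 m3 m4 hcop s1 s2
    · refine key c e a b m1.symm m3.symm m2.symm m4.symm ?_ s1 s2
      refine hcop.subset ?_
      intro y hy
      simp only [Set.mem_insert_iff, Set.mem_singleton_iff] at hy ⊢
      rcases hy with h | h | h | h <;> simp [h]
  · intro hcol
    have h3 := collinear_iff_finrank_le_one.1 hcol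
    have := card_le_of_homog _ (segment ℝ q x ∪ segment ℝ q' x') hI (by
        intro y hy
        simp at hy
        rcases hy with rfl | rfl | rfl | rfl
        · exact Or.inl (left_mem_segment _ _ _)
        · exact Or.inl (right_mem_segment _ _ _)
        · exact Or.inr (left_mem_segment _ _ _)
        · exact Or.inr (right_mem_segment _ _ _))
    have h5 : 3 ≤ ({q, x, q', x'} : Finset (Fin d → ℝ)).card := by
      rcases hne' with h | h
      · calc 3 = ({q, x, q'} : Finset (Fin d → ℝ)).card := by
              rw [Finset.card_insert_of_notMem, Finset.card_insert_of_notMem,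
                Finset.card_singleton] <;> simp [*, n3.symm]
          _ ≤ _ := Finset.card_le_card (by
            intro y hy
            simp only [Finset.mem_insert, Finset.mem_singleton] at hy ⊢
            rcases hy with h | h | h <;> simp [h])
      · calc 3 = ({q, x, x'} : Finset (Fin d → ℝ)).card := by
              rw [Finset.card_insert_of_notMem, Finset.card_insert_of_notMem,
                Finset.card_singleton] <;> simp [*, n3.symm]
          _ ≤ _ := Finset.card_le_card (by
            intro y hy
            simp only [Finset.mem_insert, Finset.mem_singleton] at hy ⊢
            rcases hy with h | h | h <;> simp [h])
    simp only at h3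
    omega

section LinAlg

variable {ι : Type*} {V : Type*} [AddCommGroup V] [Module ℝ V]

lemma finrank_span_of_indepOn {v : ι → V} {I : Finset ι}
    (hI : LinearIndepOn ℝ v (I : Set ι)) :
    Module.finrank ℝ (Submodule.span ℝ (v '' (I : Set ι))) = I.card := by
  have h := finrank_span_eq_card (R := ℝ) (b := fun i : (I : Set ι) => v i) hI
  rw [Set.image_eq_range, h]
  simp

lemma card_le_of_span_le {v : ι → V} {I J : Finset ι}
    (hI : LinearIndepOn ℝ v (I : Set ι)) (hJ : LinearIndepOn ℝ v (J : Set ι))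
    (h : ∀ j ∈ J, v j ∈ Submodule.span ℝ (v '' (I : Set ι))) : J.card ≤ I.card := by
  rw [← finrank_span_of_indepOn hI, ← finrank_span_of_indepOn hJ]
  have : Module.Finite ℝ (Submodule.span ℝ (v '' (I : Set ι))) :=
    FiniteDimensional.span_of_finite ℝ (I.finite_toSet.image v)
  apply Submodule.finrank_mono
  rw [Submodule.span_le]
  rintro _ ⟨j, hj, rfl⟩
  exact h j hj

lemma augment {v : ι → V} {I J : Finset ι}
    (hI : LinearIndepOn ℝ v (I : Set ι)) (hJ : LinearIndepOn ℝ v (J : Set ι))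
    (h : I.card < J.card) : ∃ j ∈ J, j ∉ I ∧ LinearIndepOn ℝ v (insert j (I : Set ι)) := by
  by_contra! hc
  apply absurd (card_le_of_span_le hI hJ ?_) (by omega)
  intro j hj
  by_contra hn
  have hjI : j ∉ I := fun hjI => hn (Submodule.subset_span ⟨j, hjI, rfl⟩)
  exact hc j hj hjI (hI.insert hn)

/-- A colouring of `A` with `t` colours, all of whose classes are independent. -/
def IndepColoring (v : ι → V) (A : Finset ι) (t : ℕ) (c : ι → Fin t) : Prop :=
  ∀ s, LinearIndepOn ℝ v ((A.filter (fun a => c a = s) : Finset ι) : Set ι)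

lemma rebalance [DecidableEq ι] (v : ι → V) (A : Finset ι) (t m : ℕ) (hA : A.card = t * m)
    (hc : ∃ c : ι → Fin t, IndepColoring v A t c) :
    ∃ c : ι → Fin t, IndepColoring v A t c ∧ ∀ s, (A.filter (fun a => c a = s)).card = m := by
  classical
  let Φ : (ι → Fin t) → ℕ := fun c => ∑ s, (A.filter (fun a => c a = s)).card ^ 2
  obtain ⟨c, hcI, hmin⟩ : ∃ c : ι → Fin t, IndepColoring v A t c ∧
      ∀ c', IndepColoring v A t c' → Φ c ≤ Φ c' := by
    obtain ⟨c, h1, h2⟩ := (measure Φ).wf.has_min {c | IndepColoring v A t c} hc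
    exact ⟨c, h1, fun c' h' => not_lt.1 (h2 c' h')⟩
  refine ⟨c, hcI, ?_⟩
  by_contra! hne
  obtain ⟨s₀, hs₀⟩ := hne
  have hsum : ∑ s, (A.filter (fun a => c a = s)).card = ∑ s : Fin t, m := by
    rw [← Finset.card_eq_sum_card_fiberwise (fun _ _ => Finset.mem_coe.2 (Finset.mem_univ _)), hA]
    simp
  have hex : ∃ s s', (A.filter (fun a => c a = s)).card < m ∧
      m < (A.filter (fun a => c a = s')).card := by
    have h1 : ∃ s, (A.filter (fun a => c a = s)).card < m := by
      by_contra! h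
      have := Finset.sum_lt_sum (s := Finset.univ) (fun i _ => h i)
        ⟨s₀, Finset.mem_univ _, lt_of_le_of_ne (h s₀) (Ne.symm hs₀)⟩
      omega
    have h2 : ∃ s, m < (A.filter (fun a => c a = s)).card := by
      by_contra! h
      have := Finset.sum_lt_sum (s := Finset.univ) (fun i _ => h i)
        ⟨s₀, Finset.mem_univ _, lt_of_le_of_ne (h s₀) hs₀⟩
      omega
    obtain ⟨s, hs⟩ := h1
    obtain ⟨s', hs'⟩ := h2
    exact ⟨s, s', hs, hs'⟩
  obtain ⟨s, s', hs, hs'⟩ := hex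
  have hss : s ≠ s' := by rintro rfl; omega
  obtain ⟨j, hjJ, hjI, hins⟩ := augment (hcI s) (hcI s') (by omega)
  rw [Finset.mem_filter] at hjJ
  obtain ⟨hjA, hjc⟩ := hjJ
  let c' := Function.update c j s
  have e1 : A.filter (fun a => c' a = s) = insert j (A.filter (fun a => c a = s)) := by
    ext a
    by_cases h : a = j
    · subst h; simp [c', hjA]
    · simp [c', h]
  have e2 : A.filter (fun a => c' a = s') = (A.filter (fun a => c a = s')).erase j := by
    ext a
    by_cases h : a = j
    · subst h; simp [c', hss]
    · simp [c', h]
  have e3 : ∀ k, k ≠ s → k ≠ s' → A.filter (fun a => c' a = k) = A.filter (fun a => c a = k) := by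
    intro k h1 h2
    ext a
    by_cases h : a = j
    · subst h; simp [c', h1.symm, hjc, h2.symm]
    · simp [c', h]
  have hI' : IndepColoring v A t c' := by
    intro k
    by_cases h1 : k = s
    · rw [h1, e1, Finset.coe_insert]; exact hins
    by_cases h2 : k = s'
    · rw [h2, e2]
      exact (hcI s').mono (by exact_mod_cast Finset.erase_subset _ _)
    · rw [e3 k h1 h2]; exact hcI k
  have hle := hmin c' hI'
  have hd : ∑ k, (((A.filter (fun a => c' a = k)).card : ℤ) ^ 2 -
      ((A.filter (fun a => c a = k)).card : ℤ) ^ 2) < 0 := by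
    rw [Fintype.sum_eq_add s s' hss]
    · rw [e1, e2, Finset.card_insert_of_notMem hjI, Finset.card_erase_of_mem
        (Finset.mem_filter.2 ⟨hjA, hjc⟩)]
      generalize (A.filter (fun a => c a = s)).card = x at *
      generalize (A.filter (fun a => c a = s')).card = y at *
      obtain ⟨z, rfl⟩ : ∃ z, y = z + 1 := ⟨y - 1, by omega⟩
      simp only [Nat.add_sub_cancel]
      push_cast
      have : (x : ℤ) < z := by omega
      nlinarith
    · rintro k ⟨h1, h2⟩
      rw [e3 k h1 h2]; ring
  rw [Finset.sum_sub_distrib] at hd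
  simp only [Φ] at hle
  zify at hle
  linarith

end LinAlg

lemma indepOn_mkQ_singleton {ι : Type*} {V : Type*} [AddCommGroup V] [Module ℝ V]
    {v : ι → V} {B : Set ι} (hB : LinearIndepOn ℝ v B) {w : V}
    (hw : w ∉ Submodule.span ℝ (v '' B)) :
    LinearIndepOn ℝ ((Submodule.span ℝ {w}).mkQ ∘ v) B := by
  have hw0 : w ≠ 0 := by rintro rfl; exact hw (zero_mem _)
  have h : LinearIndependent ℝ (fun i : B => v i) := hB
  have := h.map (f := (Submodule.span ℝ {w}).mkQ) (by
    rw [Submodule.ker_mkQ, ← Set.image_eq_range, Submodule.disjoint_span_singleton' hw0]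
    exact hw)
  exact this

lemma generic_projection {ι : Type*} (t m : ℕ) (B : Fin t → Finset ι)
    (hB : ∀ s, (B s).card = m) (k : ℕ) : ∀ (V : Type*) [AddCommGroup V] [Module ℝ V]
    [FiniteDimensional ℝ V] (_ : Module.finrank ℝ V = m + k) (v : ι → V)
    (_ : ∀ s, LinearIndepOn ℝ v (B s : Set ι)),
    ∃ L : V →ₗ[ℝ] EuclideanSpace ℝ (Fin m), ∀ s, LinearIndepOn ℝ (L ∘ v) (B s : Set ι) := by
  classical
  induction k with
  | zero =>
    intro V _ _ _ hV v hv
    let L : V ≃ₗ[ℝ] EuclideanSpace ℝ (Fin m) := LinearEquiv.ofFinrankEq _ _ (by simp [hV])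
    refine ⟨L.toLinearMap, fun s => ?_⟩
    have h : LinearIndependent ℝ (fun i : (B s : Set ι) => v i) := hv s
    exact h.map' L.toLinearMap L.ker
  | succ k ih =>
    intro V _ _ _ hV v hv
    let F : Finset (Subspace ℝ V) :=
      insert ⊥ (Finset.univ.image (fun s => Submodule.span ℝ (v '' (B s : Set ι))))
    have hF : ⊤ ∉ F := by
      intro h
      simp only [F, Finset.mem_insert, Finset.mem_image, Finset.mem_univ, true_and] at h
      rcases h with h | ⟨s, h⟩
      · have := finrank_bot ℝ V
        rw [← h, finrank_top] at this
        omega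
      · have := finrank_span_of_indepOn (hv s)
        rw [h, finrank_top, hB s] at this
        omega
    have := Subspace.biUnion_ne_univ_of_top_notMem hF
    obtain ⟨w, hw⟩ := (Set.ne_univ_iff_exists_notMem _).1 this
    simp only [Set.mem_iUnion, not_exists] at hw
    have hw0 : w ≠ 0 := by
      rintro rfl
      exact hw ⊥ (by simp [F]) (zero_mem _)
    have hws : ∀ s, w ∉ Submodule.span ℝ (v '' (B s : Set ι)) := fun s h =>
      hw _ (by simp only [F, Finset.mem_insert, Finset.mem_image, Finset.mem_univ, true_and]
               exact Or.inr ⟨s, rfl⟩) h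
    have hfr : Module.finrank ℝ (V ⧸ Submodule.span ℝ {w}) = m + k := by
      have h1 := Submodule.finrank_quotient_add_finrank (Submodule.span ℝ {w})
      rw [finrank_span_singleton hw0] at h1
      omega
    obtain ⟨L, hL⟩ := ih (V ⧸ Submodule.span ℝ {w}) hfr ((Submodule.span ℝ {w}).mkQ ∘ v)
      (fun s => indepOn_mkQ_singleton (hv s) (hws s))
    exact ⟨L ∘ₗ (Submodule.span ℝ {w}).mkQ, fun s => hL s⟩

lemma G_gt_one (t : ℕ) (δ : ℝ) (hδ : δ = 1 / (16 * (t + 1))) :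
    1 < (1 - δ) ^ t * Real.exp ((δ - δ ^ 2 / 2) * (t + 1 / 4)) := by
  have ht : (0 : ℝ) ≤ t := Nat.cast_nonneg t
  have hδ0 : 0 < δ := by rw [hδ]; positivity
  have hδt : δ * (t + 1) = 1 / 16 := by rw [hδ]; field_simp
  have hδ1 : δ ≤ 1 / 16 := by nlinarith
  have h1 : (1 - δ ^ 2) ^ t ≤ ((1 - δ) * Real.exp δ) ^ t := by
    apply pow_le_pow_left₀ (by nlinarith)
    have := Real.add_one_le_exp δ
    nlinarith
  have h2 : 1 - t * δ ^ 2 ≤ (1 - δ ^ 2) ^ t := by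
    have := one_add_mul_le_pow (a := -δ ^ 2) (by nlinarith) t
    have e : (1 : ℝ) - δ ^ 2 = 1 + -δ ^ 2 := by ring
    rw [e]; linarith
  have h3 := Real.add_one_le_exp ((δ - δ ^ 2 / 2) * (t + 1 / 4) - t * δ)
  have h4 : (1 - δ) ^ t * Real.exp ((δ - δ ^ 2 / 2) * (t + 1 / 4)) =
      ((1 - δ) * Real.exp δ) ^ t * Real.exp ((δ - δ ^ 2 / 2) * (t + 1 / 4) - t * δ) := by
    rw [mul_pow, ← Real.exp_nat_mul, mul_assoc, ← Real.exp_add]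
    congr 2; ring
  have h5 : t * δ ^ 2 ≤ δ / 16 := by nlinarith
  have h6 : 1 + 7 * δ / 32 ≤ (δ - δ ^ 2 / 2) * (t + 1 / 4) - t * δ + 1 := by nlinarith
  rw [h4]
  calc (1 : ℝ) < (1 - δ / 16) * (1 + 7 * δ / 32) := by nlinarith
    _ ≤ _ := by
      apply mul_le_mul
      · linarith
      · linarith
      · nlinarith
      · apply pow_nonneg; apply mul_nonneg
        · linarith
        · positivity

lemma hadamard_class {ι : Type*} (m : ℕ) (x : ι → EuclideanSpace ℝ (Fin m)) (B : Finset ι)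
    (hB : B.card = m) (hind : LinearIndepOn ℝ x (B : Set ι)) :
    ∃ κ : ℝ, 0 < κ ∧ ∀ T : EuclideanSpace ℝ (Fin m) →ₗ[ℝ] EuclideanSpace ℝ (Fin m),
      κ * |LinearMap.det T| ≤ ∏ i ∈ B, ‖T (x i)‖ := by
  classical
  let e : Fin m ≃ B := (B.equivFinOfCardEq hB).symm
  let b := EuclideanSpace.basisFun (Fin m) ℝ
  let y : Fin m → EuclideanSpace ℝ (Fin m) := fun k => x (e k)
  have hy : LinearIndependent ℝ y := LinearIndependent.comp hind e e.injective
  have : Fact (Module.finrank ℝ (EuclideanSpace ℝ (Fin m)) = m) := ⟨by simp⟩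
  have hdet : b.toBasis.det y ≠ 0 := by
    have := (Module.Basis.is_basis_iff_det b.toBasis (v := y)).1
      ⟨hy, hy.span_eq_top_of_card_eq_finrank' (by simp)⟩
    exact this.ne_zero
  refine ⟨|b.toBasis.det y|, abs_pos.2 hdet, fun T => ?_⟩
  have h1 := Orientation.abs_volumeForm_apply_le b.toBasis.orientation (T ∘ y)
  rw [Orientation.volumeForm_robust _ b rfl, Module.Basis.det_comp, abs_mul] at h1
  have h2 : ∏ i, ‖(⇑T ∘ y) i‖ = ∏ i ∈ B, ‖T (x i)‖ := by
    rw [← Finset.prod_coe_sort B]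
    exact e.prod_comp (fun i => ‖T (x i)‖)
  rw [← h2, mul_comm]
  exact h1

lemma near_isotropic {ι : Type*} (m t : ℕ) (x : ι → EuclideanSpace ℝ (Fin m)) (A : Finset ι)
    (c : ι → Fin t) (hc : IndepColoring x A t c)
    (hcard : ∀ s, (A.filter (fun a => c a = s)).card = m) :
    ∃ T : EuclideanSpace ℝ (Fin m) →ₗ[ℝ] EuclideanSpace ℝ (Fin m),
      ∃ u : ι → EuclideanSpace ℝ (Fin m), (∀ i ∈ A, ‖u i‖ = 1) ∧
      (∀ i ∈ A, ∃ k : ℝ, u i = k • T (x i)) ∧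
      ∀ j ∈ A, ∑ i ∈ A, (inner ℝ (u i) (u j)) ^ 2 ≤ (t : ℝ) + 1 / 4 := by
  classical
  let F : (EuclideanSpace ℝ (Fin m) →ₗ[ℝ] EuclideanSpace ℝ (Fin m)) → ℝ := fun T => (∏ i ∈ A, ‖T (x i)‖) / |LinearMap.det T| ^ t
  choose κ hκ0 hκ using fun s => hadamard_class m x _ (hcard s) (hc s)
  have hlow : ∀ T : EuclideanSpace ℝ (Fin m) →ₗ[ℝ] EuclideanSpace ℝ (Fin m), LinearMap.det T ≠ 0 → ∏ s, κ s ≤ F T := by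
    intro T hT
    have hT' : 0 < |LinearMap.det T| := abs_pos.2 hT
    simp only [F]
    rw [le_div_iff₀ (by positivity)]
    calc (∏ s, κ s) * |LinearMap.det T| ^ t = ∏ s, (κ s * |LinearMap.det T|) := by
          rw [Finset.prod_mul_distrib]; simp
      _ ≤ ∏ s, ∏ i ∈ A.filter (fun a => c a = s), ‖T (x i)‖ :=
          Finset.prod_le_prod (fun s _ => by have := hκ0 s; positivity) (fun s _ => hκ s T)
      _ = _ := Finset.prod_fiberwise_of_maps_to (fun _ _ => Finset.mem_univ _) _
  have hKpos : 0 < ∏ s, κ s := Finset.prod_pos (fun s _ => hκ0 s)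
  set δ : ℝ := 1 / (16 * ((t : ℝ) + 1)) with hδ
  set G : ℝ := (1 - δ) ^ t * Real.exp ((δ - δ ^ 2 / 2) * (t + 1 / 4)) with hG
  have hG1 : 1 < G := G_gt_one t δ hδ
  have hδ0 : 0 < δ := by rw [hδ]; positivity
  have hδ1 : δ ≤ 1 / 16 := by
    have : (0 : ℝ) ≤ t := Nat.cast_nonneg t
    rw [hδ]
    apply one_div_le_one_div_of_le <;> linarith
  obtain ⟨T, hT, hTmin⟩ : ∃ T : EuclideanSpace ℝ (Fin m) →ₗ[ℝ] EuclideanSpace ℝ (Fin m), LinearMap.det T ≠ 0 ∧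
      ∀ T' : EuclideanSpace ℝ (Fin m) →ₗ[ℝ] EuclideanSpace ℝ (Fin m), LinearMap.det T' ≠ 0 → F T < G * F T' := by
    let S : Set ℝ := F '' {T | LinearMap.det T ≠ 0}
    have hS : S.Nonempty := ⟨_, LinearMap.id, by simp, rfl⟩
    have hSlow : ∀ y ∈ S, ∏ s, κ s ≤ y := by
      rintro _ ⟨T, hT, rfl⟩
      exact hlow T hT
    have hI : ∏ s, κ s ≤ sInf S := le_csInf hS hSlow
    obtain ⟨_, ⟨T, hT, rfl⟩, hlt⟩ := exists_lt_of_csInf_lt hS (b := G * sInf S) (by nlinarith)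
    refine ⟨T, hT, fun T' hT' => hlt.trans_le ?_⟩
    apply mul_le_mul_of_nonneg_left _ (by linarith)
    exact csInf_le ⟨_, hSlow⟩ ⟨T', hT', rfl⟩
  have hx0 : ∀ i ∈ A, T (x i) ≠ 0 := by
    intro i hi h
    have h1 : x i = 0 := by
      have hinj : Function.Injective T := by
        have := LinearMap.isUnit_iff_isUnit_det T |>.2 (isUnit_iff_ne_zero.2 hT)
        exact ((Module.End.isUnit_iff T).1 this).1
      exact hinj (by rw [h, map_zero])
    exact (hc (c i)).ne_zero (i := i) (by simp [hi]) h1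
  let u : ι → EuclideanSpace ℝ (Fin m) := fun i => ‖T (x i)‖⁻¹ • T (x i)
  have hu1 : ∀ i ∈ A, ‖u i‖ = 1 := by
    intro i hi
    simp only [u, norm_smul, norm_inv, norm_norm]
    exact inv_mul_cancel₀ (norm_ne_zero_iff.2 (hx0 i hi))
  refine ⟨T, u, hu1, fun i _ => ⟨_, rfl⟩, ?_⟩
  intro j hj
  let f : Module.Dual ℝ (EuclideanSpace ℝ (Fin m)) := (-δ) • (innerSL ℝ (u j)).toLinearMap
  let S : EuclideanSpace ℝ (Fin m) →ₗ[ℝ] EuclideanSpace ℝ (Fin m) := LinearMap.transvection f (u j)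
  have hSapp : ∀ z, S z = z - (δ * inner ℝ (u j) z) • u j := by
    intro z
    simp [S, LinearMap.transvection.apply, f, sub_eq_add_neg]
  have hSdet : LinearMap.det S = 1 - δ := by
    simp only [S, LinearMap.transvection.det]
    simp [f, hu1 j hj, sub_eq_add_neg]
  have hnorm : ∀ i ∈ A, ‖S (u i)‖ ≤ Real.exp (-((δ - δ ^ 2 / 2) * (inner ℝ (u i) (u j)) ^ 2)) := by
    intro i hi
    have e1 : ‖S (u i)‖ ^ 2 = 1 - (2 * δ - δ ^ 2) * (inner ℝ (u i) (u j)) ^ 2 := by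
      rw [hSapp, norm_sub_sq_real, norm_smul (_ : ℝ) (u j), inner_smul_right, hu1 i hi, hu1 j hj,
        real_inner_comm (u i) (u j)]
      simp only [Real.norm_eq_abs, mul_one, sq_abs]
      ring
    have e2 : ‖S (u i)‖ ^ 2 ≤ Real.exp (-((δ - δ ^ 2 / 2) * (inner ℝ (u i) (u j)) ^ 2)) ^ 2 := by
      rw [e1, ← Real.exp_nat_mul]
      have := Real.add_one_le_exp
        (((2 : ℕ) : ℝ) * -((δ - δ ^ 2 / 2) * (inner ℝ (u i) (u j)) ^ 2))
      refine le_trans (le_of_eq ?_) this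
      push_cast; ring
    exact le_of_sq_le_sq e2 (Real.exp_pos _).le
  have hST := hTmin (S ∘ₗ T) (by
    rw [LinearMap.det_comp, hSdet]
    exact mul_ne_zero (by linarith) hT)
  have hprod : ∏ i ∈ A, ‖(S ∘ₗ T) (x i)‖ ≤ (∏ i ∈ A, ‖T (x i)‖) *
      Real.exp (-((δ - δ ^ 2 / 2) * ∑ i ∈ A, (inner ℝ (u i) (u j)) ^ 2)) := by
    rw [Finset.mul_sum, ← Finset.sum_neg_distrib, Real.exp_sum, ← Finset.prod_mul_distrib]
    apply Finset.prod_le_prod (fun i _ => norm_nonneg _)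
    intro i hi
    have : (S ∘ₗ T) (x i) = ‖T (x i)‖ • S (u i) := by
      rw [← map_smul]
      simp only [u, LinearMap.comp_apply]
      rw [smul_inv_smul₀ (norm_ne_zero_iff.2 (hx0 i hi))]
    rw [this, norm_smul, norm_norm]
    exact mul_le_mul_of_nonneg_left (hnorm i hi) (norm_nonneg _)
  by_contra! hcon
  set sc := ∑ i ∈ A, (inner ℝ (u i) (u j)) ^ 2 with hsc
  have hP : 0 < ∏ i ∈ A, ‖T (x i)‖ := Finset.prod_pos (fun i hi => norm_pos_iff.2 (hx0 i hi))
  have hD : 0 < |LinearMap.det T| ^ t := by have := abs_pos.2 hT; positivity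
  have hδt : 0 < (1 - δ) ^ t := by apply pow_pos; linarith
  have hFST : G * F (S ∘ₗ T) ≤ F T := by
    simp only [F]
    rw [LinearMap.det_comp, hSdet, abs_mul, abs_of_pos (by linarith : 0 < 1 - δ), mul_pow,
      ← mul_div_assoc, div_le_div_iff₀ (by positivity) hD]
    have hexp : Real.exp ((δ - δ ^ 2 / 2) * (t + 1 / 4)) * Real.exp (-((δ - δ ^ 2 / 2) * sc)) ≤ 1 := by
      rw [← Real.exp_add]
      apply Real.exp_le_one_iff.2
      have hβ : 0 ≤ δ - δ ^ 2 / 2 := by nlinarith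
      have := mul_le_mul_of_nonneg_left hcon.le hβ
      linarith
    calc G * (∏ i ∈ A, ‖(S ∘ₗ T) (x i)‖) * |LinearMap.det T| ^ t
        ≤ G * ((∏ i ∈ A, ‖T (x i)‖) * Real.exp (-((δ - δ ^ 2 / 2) * sc))) *
          |LinearMap.det T| ^ t := by gcongr
      _ = (Real.exp ((δ - δ ^ 2 / 2) * (t + 1 / 4)) * Real.exp (-((δ - δ ^ 2 / 2) * sc))) *
          ((∏ i ∈ A, ‖T (x i)‖) * ((1 - δ) ^ t * |LinearMap.det T| ^ t)) := by rw [hG]; ring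
      _ ≤ 1 * ((∏ i ∈ A, ‖T (x i)‖) * ((1 - δ) ^ t * |LinearMap.det T| ^ t)) := by
          gcongr
      _ = _ := one_mul _
  linarith

lemma gram_swap {ι κ : Type*} (L : Finset ι) (K : Finset κ) (g : κ → ι → ℝ) :
    ∑ p ∈ K, ∑ q ∈ K, (∑ i ∈ L, g p i * g q i) ^ 2 =
      ∑ i ∈ L, ∑ j ∈ L, (∑ p ∈ K, g p i * g p j) ^ 2 := by
  have h1 : ∀ p q, (∑ i ∈ L, g p i * g q i) ^ 2 =
      ∑ i ∈ L, ∑ j ∈ L, (g p i * g q i) * (g p j * g q j) := by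
    intro p q; rw [sq, Finset.sum_mul_sum]
  have h2 : ∀ i j, (∑ p ∈ K, g p i * g p j) ^ 2 =
      ∑ p ∈ K, ∑ q ∈ K, (g p i * g p j) * (g q i * g q j) := by
    intro p q; rw [sq, Finset.sum_mul_sum]
  simp only [h1, h2]
  calc ∑ p ∈ K, ∑ q ∈ K, ∑ i ∈ L, ∑ j ∈ L, (g p i * g q i) * (g p j * g q j)
      = ∑ p ∈ K, ∑ i ∈ L, ∑ q ∈ K, ∑ j ∈ L, (g p i * g q i) * (g p j * g q j) :=
        Finset.sum_congr rfl (fun p _ => Finset.sum_comm)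
    _ = ∑ i ∈ L, ∑ p ∈ K, ∑ q ∈ K, ∑ j ∈ L, (g p i * g q i) * (g p j * g q j) :=
        Finset.sum_comm
    _ = ∑ i ∈ L, ∑ p ∈ K, ∑ j ∈ L, ∑ q ∈ K, (g p i * g q i) * (g p j * g q j) :=
        Finset.sum_congr rfl (fun i _ => Finset.sum_congr rfl (fun p _ => Finset.sum_comm))
    _ = ∑ i ∈ L, ∑ j ∈ L, ∑ p ∈ K, ∑ q ∈ K, (g p i * g q i) * (g p j * g q j) :=
        Finset.sum_congr rfl (fun i _ => Finset.sum_comm)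
    _ = _ := by
        refine Finset.sum_congr rfl (fun i _ => Finset.sum_congr rfl (fun j _ =>
          Finset.sum_congr rfl (fun p _ => Finset.sum_congr rfl (fun q _ => by ring))))

lemma line_gram {ι F : Type*} [NormedAddCommGroup F] [InnerProductSpace ℝ F]
    [FiniteDimensional ℝ F] (w : ι → F) (L : Finset ι) (hw : ∀ i ∈ L, ‖w i‖ = 1) :
    (L.card : ℝ) ^ 2 ≤ Module.finrank ℝ F * ∑ i ∈ L, ∑ j ∈ L, (inner ℝ (w i) (w j)) ^ 2 := by
  classical
  let b := stdOrthonormalBasis ℝ F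
  let g : Fin (Module.finrank ℝ F) → ι → ℝ := fun p i => inner ℝ (b p) (w i)
  have hin : ∀ i j, ∑ p, g p i * g p j = inner ℝ (w i) (w j) := by
    intro i j
    rw [← b.sum_inner_mul_inner (w i) (w j)]
    refine Finset.sum_congr rfl (fun p _ => ?_)
    simp only [g]
    rw [real_inner_comm]
  have h1 : (L.card : ℝ) = ∑ p, ∑ i ∈ L, g p i * g p i := by
    rw [Finset.sum_comm]
    simp only [hin]
    rw [Finset.sum_congr rfl (g := fun _ => (1 : ℝ))]
    · simp
    · intro i hi
      rw [real_inner_self_eq_norm_sq, hw i hi]; norm_num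
  have h2 := sq_sum_le_card_mul_sum_sq (s := (Finset.univ : Finset (Fin (Module.finrank ℝ F))))
    (f := fun p => ∑ i ∈ L, g p i * g p i)
  rw [← h1] at h2
  refine h2.trans ?_
  simp only [Finset.card_univ, Fintype.card_fin]
  apply mul_le_mul_of_nonneg_left _ (Nat.cast_nonneg _)
  simp only [← hin]
  rw [← gram_swap]
  apply Finset.sum_le_sum
  intro p _
  exact Finset.single_le_sum (f := fun q => (∑ i ∈ L, g p i * g q i) ^ 2)
    (fun q _ => sq_nonneg _) (Finset.mem_univ p)

lemma line_gram_two {ι E : Type*} [NormedAddCommGroup E] [InnerProductSpace ℝ E]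
    (u : ι → E) (L : Finset ι) (hw : ∀ i ∈ L, ‖u i‖ = 1) (y z : E)
    (hu : ∀ i ∈ L, u i ∈ Submodule.span ℝ {y, z}) :
    (L.card : ℝ) ^ 2 ≤ 2 * ∑ i ∈ L, ∑ j ∈ L, (inner ℝ (u i) (u j)) ^ 2 := by
  classical
  let W := Submodule.span ℝ ({y, z} : Set E)
  have : FiniteDimensional ℝ W := FiniteDimensional.span_of_finite ℝ (by simp)
  let w : ι → W := fun i => if h : u i ∈ W then ⟨u i, h⟩ else 0
  have hwu : ∀ i ∈ L, (w i : E) = u i := by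
    intro i hi
    simp only [w, dif_pos (show u i ∈ W from hu i hi)]
  have h1 := line_gram w L (fun i hi => by rw [Submodule.coe_norm, hwu i hi, hw i hi])
  have h2 : ∑ i ∈ L, ∑ j ∈ L, (inner ℝ (w i) (w j)) ^ 2 =
      ∑ i ∈ L, ∑ j ∈ L, (inner ℝ (u i) (u j)) ^ 2 := by
    refine Finset.sum_congr rfl (fun i hi => Finset.sum_congr rfl (fun j hj => ?_))
    rw [Submodule.coe_inner, hwu i hi, hwu j hj]
  rw [h2] at h1
  have h3 : Module.finrank ℝ W ≤ 2 := by
    have h4 := finrank_span_finset_le_card (R := ℝ) ({y, z} : Finset E)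
    have h5 := Finset.card_le_two (a := y) (b := z)
    rw [Set.finrank, Finset.coe_insert, Finset.coe_singleton] at h4
    exact h4.trans h5
  refine h1.trans ?_
  apply mul_le_mul_of_nonneg_right (by exact_mod_cast h3)
  exact Finset.sum_nonneg (fun i _ => Finset.sum_nonneg (fun j _ => sq_nonneg _))

section Lines

set_option linter.unusedSectionVars false

variable {ι : Type*} [DecidableEq ι] {V : Type*} [AddCommGroup V] [Module ℝ V]

open Classical in
/-- The points of `A` on the line through `i` and `j`. -/
noncomputable def lineThrough (v : ι → V) (A : Finset ι) (i j : ι) : Finset ι :=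
  A.filter (fun k => v k ∈ Submodule.span ℝ {v i, v j})

lemma mem_lineThrough {v : ι → V} {A : Finset ι} {i j k : ι} :
    k ∈ lineThrough v A i j ↔ k ∈ A ∧ v k ∈ Submodule.span ℝ {v i, v j} := by
  simp [lineThrough]

lemma finrank_span_pair {v : ι → V} {i j : ι} (hij : i ≠ j)
    (h : LinearIndepOn ℝ v ({i, j} : Set ι)) :
    Module.finrank ℝ (Submodule.span ℝ {v i, v j}) = 2 := by
  have h1 := finrank_span_of_indepOn (v := v) (I := {i, j}) (by simpa using h)
  rw [Finset.card_pair hij] at h1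
  rwa [Finset.coe_pair, Set.image_pair] at h1

lemma lineThrough_eq {v : ι → V} {A : Finset ι}
    (hp : ∀ a ∈ A, ∀ b ∈ A, a ≠ b → LinearIndepOn ℝ v ({a, b} : Set ι))
    {i j k l : ι} (hi : i ∈ A) (hj : j ∈ A) (hij : i ≠ j) (hk : k ∈ lineThrough v A i j)
    (hl : l ∈ lineThrough v A i j) (hkl : k ≠ l) :
    lineThrough v A k l = lineThrough v A i j := by
  rw [mem_lineThrough] at hk hl
  have hle : Submodule.span ℝ {v k, v l} ≤ Submodule.span ℝ {v i, v j} := by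
    rw [Submodule.span_le]
    rintro x (rfl | rfl)
    · exact hk.2
    · exact hl.2
  have : FiniteDimensional ℝ (Submodule.span ℝ ({v i, v j} : Set V)) :=
    FiniteDimensional.span_of_finite ℝ (by simp)
  have heq := Submodule.eq_of_le_of_finrank_eq hle (by
    rw [finrank_span_pair hkl (hp k hk.1 l hl.1 hkl), finrank_span_pair hij (hp i hi j hj hij)])
  ext x
  rw [mem_lineThrough, mem_lineThrough, heq]

lemma left_mem_lineThrough {v : ι → V} {A : Finset ι} {i j : ι} (hi : i ∈ A) :
    i ∈ lineThrough v A i j :=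
  mem_lineThrough.2 ⟨hi, Submodule.subset_span (by simp)⟩

lemma right_mem_lineThrough {v : ι → V} {A : Finset ι} {i j : ι} (hj : j ∈ A) :
    j ∈ lineThrough v A i j :=
  mem_lineThrough.2 ⟨hj, Submodule.subset_span (by simp)⟩

/-- All lines determined by `A`. -/
noncomputable def allLines (v : ι → V) (A : Finset ι) : Finset (Finset ι) :=
  A.offDiag.image (fun p => lineThrough v A p.1 p.2)

lemma line_eq_of_mem {v : ι → V} {A : Finset ι}
    (hp : ∀ a ∈ A, ∀ b ∈ A, a ≠ b → LinearIndepOn ℝ v ({a, b} : Set ι))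
    {L : Finset ι} (hL : L ∈ allLines v A) {k l : ι} (hk : k ∈ L) (hl : l ∈ L) (hkl : k ≠ l) :
    lineThrough v A k l = L := by
  simp only [allLines, Finset.mem_image, Finset.mem_offDiag] at hL
  obtain ⟨⟨i, j⟩, ⟨hi, hj, hij⟩, rfl⟩ := hL
  exact lineThrough_eq hp hi hj hij hk hl hkl

lemma line_subset {v : ι → V} {A : Finset ι} {L : Finset ι} (hL : L ∈ allLines v A) : L ⊆ A := by
  simp only [allLines, Finset.mem_image, Finset.mem_offDiag] at hL
  obtain ⟨⟨i, j⟩, ⟨hi, hj, hij⟩, rfl⟩ := hL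
  intro x hx
  exact (mem_lineThrough.1 hx).1

lemma exists_other {v : ι → V} {A : Finset ι} {L : Finset ι} (hL : L ∈ allLines v A) (q : ι) :
    ∃ a ∈ L, a ≠ q := by
  simp only [allLines, Finset.mem_image, Finset.mem_offDiag] at hL
  obtain ⟨⟨i, j⟩, ⟨hi, hj, hij⟩, rfl⟩ := hL
  by_cases h : i = q
  · exact ⟨j, right_mem_lineThrough hj, fun h' => hij (h.trans h'.symm)⟩
  · exact ⟨i, left_mem_lineThrough hi, h⟩

lemma sum_over_lines {v : ι → V} {A : Finset ι}
    (hp : ∀ a ∈ A, ∀ b ∈ A, a ≠ b → LinearIndepOn ℝ v ({a, b} : Set ι)) (f : ι × ι → ℝ) :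
    ∑ L ∈ allLines v A, ∑ p ∈ L.offDiag, f p = ∑ p ∈ A.offDiag, f p := by
  rw [← Finset.sum_fiberwise_of_maps_to (s := A.offDiag) (t := allLines v A)
    (g := fun p => lineThrough v A p.1 p.2)
    (fun p hp => Finset.mem_image_of_mem _ hp) f]
  refine Finset.sum_congr rfl (fun L hL => Finset.sum_congr ?_ (fun _ _ => rfl))
  ext ⟨k, l⟩
  simp only [Finset.mem_offDiag, Finset.mem_filter]
  constructor
  · rintro ⟨hk, hl, hkl⟩
    exact ⟨⟨line_subset hL hk, line_subset hL hl, hkl⟩, line_eq_of_mem hp hL hk hl hkl⟩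
  · rintro ⟨⟨hk, hl, hkl⟩, h⟩
    rw [← h]
    exact ⟨left_mem_lineThrough hk, right_mem_lineThrough hl, hkl⟩

lemma sum_offDiag (A : Finset ι) (f : ι → ι → ℝ) :
    ∑ p ∈ A.offDiag, f p.1 p.2 = ∑ i ∈ A, ∑ j ∈ A, f i j - ∑ i ∈ A, f i i := by
  have h1 : ∑ p ∈ A ×ˢ A, f p.1 p.2 = ∑ i ∈ A, ∑ j ∈ A, f i j := Finset.sum_product' _ _ _
  have h2 : ∑ p ∈ A.diag, f p.1 p.2 = ∑ i ∈ A, f i i := by simp [Finset.diag]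
  have h3 := Finset.sum_union (Finset.disjoint_diag_offDiag (s := A)) (f := fun p => f p.1 p.2)
  rw [Finset.diag_union_offDiag] at h3
  linarith

lemma indepOn_quotient {v : ι → V} {q : ι} {B : Set ι} (hqB : q ∉ B)
    (h : LinearIndepOn ℝ v (insert q B)) :
    LinearIndepOn ℝ ((Submodule.span ℝ {v q}).mkQ ∘ v) B := by
  have h1 : LinearIndepOn ℝ v {q} := h.mono (by simp)
  have := (LinearIndepOn.quotient_iff_union h1 (t := B) (by simpa using hqB)).2
    (by simpa using h)
  rwa [Set.image_singleton] at this

lemma good_point [FiniteDimensional ℝ V] (v : ι → V) (A : Finset ι) (t m : ℕ) (ht : 1 ≤ t)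
    (hm : 1 ≤ m) (hA : A.card = t * m) (hcol : ∃ c : ι → Fin t, IndepColoring v A t c)
    (hp : ∀ a ∈ A, ∀ b ∈ A, a ≠ b → LinearIndepOn ℝ v ({a, b} : Set ι)) :
    ∃ q ∈ A, ∃ A' ⊆ A, q ∉ A' ∧ A.card + 1 ≤ A'.card + 2 * t ∧
      ∀ a ∈ A', ∀ b ∈ A', LinearIndepOn ℝ ((Submodule.span ℝ {v q}).mkQ ∘ v) ({a, b} : Set ι) := by
  obtain ⟨c, hc, hcard⟩ := rebalance v A t m hA hcol
  have hmV : m ≤ Module.finrank ℝ V := by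
    rw [← hcard ⟨0, ht⟩, ← finrank_span_of_indepOn (hc ⟨0, ht⟩)]
    exact Submodule.finrank_le _
  obtain ⟨P, hP⟩ := generic_projection t m _ hcard (Module.finrank ℝ V - m) V (by omega) v hc
  obtain ⟨T, u, hu1, hu2, hu3⟩ := near_isotropic m t (P ∘ v) A c hP hcard
  set n := A.card with hn
  have hn1 : 1 ≤ n := by rw [hA]; exact Nat.mul_pos ht hm
  have hupper : ∑ p ∈ A.offDiag, (inner ℝ (u p.1) (u p.2)) ^ 2 ≤ (n : ℝ) * (t - 3 / 4) := by
    rw [sum_offDiag A (fun i j => (inner ℝ (u i) (u j)) ^ 2)]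
    have h1 : ∑ i ∈ A, ∑ j ∈ A, (inner ℝ (u i) (u j)) ^ 2 ≤ (n : ℝ) * (t + 1 / 4) := by
      rw [Finset.sum_comm]
      refine (Finset.sum_le_sum hu3).trans ?_
      rw [Finset.sum_const, nsmul_eq_mul]
    have h2 : ∑ i ∈ A, (inner ℝ (u i) (u i)) ^ 2 = (n : ℝ) := by
      rw [Finset.sum_congr rfl (g := fun _ => (1 : ℝ))]
      · simp [hn]
      · intro i hi
        rw [real_inner_self_eq_norm_sq, hu1 i hi]; norm_num
    linarith
  have hlower : ∀ L ∈ allLines v A, (L.card : ℝ) ^ 2 / 2 - L.card ≤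
      ∑ p ∈ L.offDiag, (inner ℝ (u p.1) (u p.2)) ^ 2 := by
    intro L hL
    have hLA := line_subset hL
    rw [sum_offDiag L (fun i j => (inner ℝ (u i) (u j)) ^ 2)]
    have h2 : ∑ i ∈ L, (inner ℝ (u i) (u i)) ^ 2 = (L.card : ℝ) := by
      rw [Finset.sum_congr rfl (g := fun _ => (1 : ℝ))]
      · simp
      · intro i hi
        rw [real_inner_self_eq_norm_sq, hu1 i (hLA hi)]; norm_num
    have h1 : (L.card : ℝ) ^ 2 ≤ 2 * ∑ i ∈ L, ∑ j ∈ L, (inner ℝ (u i) (u j)) ^ 2 := by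
      have hL' := hL
      simp only [allLines, Finset.mem_image, Finset.mem_offDiag] at hL'
      obtain ⟨⟨i, j⟩, ⟨hi, hj, hij⟩, hLe⟩ := hL'
      apply line_gram_two u L (fun i hi => hu1 i (hLA hi)) (T (P (v i))) (T (P (v j)))
      intro k hk
      obtain ⟨r, hr⟩ := hu2 k (hLA hk)
      rw [hr]
      apply Submodule.smul_mem
      rw [← hLe, mem_lineThrough] at hk
      have := Submodule.mem_map_of_mem (f := T ∘ₗ P) hk.2
      rw [Submodule.map_span, Set.image_pair] at this
      exact this
    linarith
  have hcount : ∑ L ∈ allLines v A, ((L.card : ℝ) ^ 2 - L.card) = (n : ℝ) ^ 2 - n := by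
    have h := sum_over_lines hp (fun _ => (1 : ℝ))
    simp only [Finset.sum_const, nsmul_eq_mul, mul_one, Finset.offDiag_card] at h
    have e : ∀ k : ℕ, ((k * k - k : ℕ) : ℝ) = (k : ℝ) ^ 2 - k := by
      intro k
      rw [Nat.cast_sub (Nat.le_mul_self k)]; push_cast; ring
    simp only [e] at h
    exact h
  have hsumL : (n : ℝ) * (n - 2 * t + 1 / 2) ≤ ∑ L ∈ allLines v A, (L.card : ℝ) := by
    have h1 := (Finset.sum_le_sum hlower).trans
      ((sum_over_lines hp (fun p => (inner ℝ (u p.1) (u p.2)) ^ 2)).trans_le hupper)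
    have h2 : ∑ L ∈ allLines v A, ((L.card : ℝ) ^ 2 / 2 - L.card) =
        (∑ L ∈ allLines v A, ((L.card : ℝ) ^ 2 - L.card) - ∑ L ∈ allLines v A, (L.card : ℝ)) / 2 := by
      rw [← Finset.sum_sub_distrib, Finset.sum_div]
      exact Finset.sum_congr rfl (fun L _ => by ring)
    rw [h2, hcount] at h1
    nlinarith
  have hdouble : ∑ L ∈ allLines v A, (L.card : ℝ) =
      ∑ q ∈ A, (((allLines v A).filter (fun L => q ∈ L)).card : ℝ) := by
    have := Finset.sum_card_bipartiteAbove_eq_sum_card_bipartiteBelow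
      (s := A) (t := allLines v A) (fun q L => q ∈ L)
    have h2 : ∀ L ∈ allLines v A, Finset.bipartiteBelow (fun q L => q ∈ L) A L = L := by
      intro L hL
      ext x
      simp only [Finset.mem_bipartiteBelow]
      exact ⟨fun h => h.2, fun h => ⟨line_subset hL h, h⟩⟩
    have h3 := Finset.sum_congr (rfl : allLines v A = allLines v A)
      (fun L hL => congrArg Finset.card (h2 L hL))
    rw [h3] at this
    exact_mod_cast this.symm
  obtain ⟨q, hq, hqk⟩ : ∃ q ∈ A, (n : ℝ) - 2 * t + 1 / 2 ≤
      (((allLines v A).filter (fun L => q ∈ L)).card : ℝ) := by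
    apply Finset.exists_le_of_sum_le (Finset.card_pos.1 hn1)
    rw [← hdouble, Finset.sum_const, nsmul_eq_mul]
    exact hsumL
  have : Nonempty ι := ⟨q⟩
  choose! g hgL hgq using fun (L : Finset ι) (hL : L ∈ allLines v A) => exists_other hL q
  have hline : ∀ L ∈ (allLines v A).filter (fun L => q ∈ L), lineThrough v A q (g L) = L := by
    intro L hL
    rw [Finset.mem_filter] at hL
    exact line_eq_of_mem hp hL.1 hL.2 (hgL L hL.1) (hgq L hL.1).symm
  refine ⟨q, hq, ((allLines v A).filter (fun L => q ∈ L)).image g, ?_, ?_, ?_, ?_⟩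
  · intro x hx
    rw [Finset.mem_image] at hx
    obtain ⟨L, hL, rfl⟩ := hx
    have hL := (Finset.mem_filter.1 hL).1
    exact line_subset hL (hgL L hL)
  · intro hx
    rw [Finset.mem_image] at hx
    obtain ⟨L, hL, h⟩ := hx
    exact hgq L (Finset.mem_filter.1 hL).1 h
  · rw [Finset.card_image_of_injOn]
    · have : ((n + 1 : ℕ) : ℝ) <
          ((((allLines v A).filter (fun L => q ∈ L)).card + 2 * t + 1 : ℕ) : ℝ) := by
        push_cast; linarith
      have := Nat.cast_lt.1 this
      omega
    · intro L hL L' hL' h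
      rw [← hline L hL, ← hline L' hL', h]
  · intro a ha b hb
    rw [Finset.mem_image] at ha hb
    obtain ⟨L, hL, rfl⟩ := ha
    obtain ⟨L', hL', rfl⟩ := hb
    have m1 := (Finset.mem_filter.1 hL).1
    have m2 := (Finset.mem_filter.1 hL').1
    have q1 := hgq L m1
    have q2 := hgq L' m2
    have a1 := line_subset m1 (hgL L m1)
    have a2 := line_subset m2 (hgL L' m2)
    apply indepOn_quotient
    · simp [q1.symm, q2.symm]
    by_cases heq : g L = g L'
    · rw [← heq]
      have := hp q hq _ a1 q1.symm
      simpa using this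
    · have h1 := hp q hq _ a1 q1.symm
      have h2 : v (g L') ∉ Submodule.span ℝ (v '' {q, g L}) := by
        intro h
        rw [Set.image_pair] at h
        have h3 : g L' ∈ L := by
          rw [← hline L hL, mem_lineThrough]
          exact ⟨a2, h⟩
        have h4 := line_eq_of_mem hp m1 (Finset.mem_filter.1 hL).2 h3 q2.symm
        rw [hline L' hL'] at h4
        exact heq (by rw [h4])
      have := h1.insert h2
      refine this.mono ?_
      intro x
      simp only [Set.mem_insert_iff, Set.mem_singleton_iff]
      rintro (h | h | h) <;> simp [h]

end Lines

lemma exists_quotient_indep {ι : Type*} [DecidableEq ι] {V : Type*} [AddCommGroup V] [Module ℝ V]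
    (v : ι → V) (I : Finset ι) (hI : LinearIndepOn ℝ v (I : Set ι)) (q : ι) (hq : v q ≠ 0) :
    ∃ I' ⊆ I, I.card ≤ I'.card + 1 ∧
      LinearIndepOn ℝ ((Submodule.span ℝ {v q}).mkQ ∘ v) (I' : Set ι) := by
  obtain ⟨b, hb, hqb, hspan, hbi⟩ := exists_linearIndepOn_extension (K := ℝ) (v := v) (s := {q})
    (t := insert q (I : Set ι)) (LinearIndepOn.singleton hq) (by simp)
  have hfin : b.Finite := (I.finite_toSet.insert q).subset hb
  lift b to Finset ι using hfin
  have hqb' : q ∈ b := by simpa using hqb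
  have h1 : I.card ≤ b.card := card_le_of_span_le hbi hI (fun j hj =>
    hspan ⟨j, by simp [hj], rfl⟩)
  refine ⟨b.erase q, ?_, ?_, ?_⟩
  · intro x hx
    rw [Finset.mem_erase] at hx
    have := hb hx.2
    simpa [hx.1] using this
  · rw [Finset.card_erase_of_mem hqb']; omega
  · apply indepOn_quotient
    · simp
    · rw [← Finset.coe_insert, Finset.insert_erase hqb']
      exact hbi

lemma star_recursion {ι : Type*} [DecidableEq ι] (t : ℕ) (ht : 1 ≤ t) (r : ℕ) :
    ∀ (V : Type*) [AddCommGroup V] [Module ℝ V] [FiniteDimensional ℝ V] (v : ι → V)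
      (A : Finset ι) (m : ℕ) (_ : 3 * (r + 1) ≤ m) (_ : A.card = t * m)
      (_ : ∃ c : ι → Fin t, IndepColoring v A t c)
      (_ : ∀ a ∈ A, ∀ b ∈ A, a ≠ b → LinearIndepOn ℝ v ({a, b} : Set ι)),
      ∃ Q ⊆ A, ∃ A' ⊆ A, Disjoint Q A' ∧ Q.card = r + 1 ∧
        t * (m + 1 - 3 * (r + 1)) + 1 ≤ A'.card ∧
        ∀ a ∈ A', ∀ b ∈ A', LinearIndepOn ℝ v ((Q : Set ι) ∪ {a, b}) := by
  induction r with
  | zero =>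
    intro V _ _ _ v A m hm hA hcol hp
    obtain ⟨q, hq, A', hA', hqA', hcard, hind⟩ :=
      good_point v A t m ht (by omega) hA hcol hp
    have hvq : v q ≠ 0 := hcol.elim (fun c hc => (hc (c q)).ne_zero (i := q) (by simp [hq]))
    refine ⟨{q}, by simpa using hq, A', hA', by simpa using hqA', by simp, ?_, ?_⟩
    · obtain ⟨k, rfl⟩ : ∃ k, m = k + 2 := ⟨m - 2, by omega⟩
      rw [hA] at hcard
      have : k + 2 + 1 - 3 * (0 + 1) = k := by omega
      rw [this]
      nlinarith
    · intro a ha b hb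
      rw [Finset.coe_singleton]
      apply LinearIndepOn.union_of_quotient (LinearIndepOn.singleton hvq)
      rw [Set.image_singleton]
      exact hind a ha b hb
  | succ r ih =>
    intro V _ _ _ v A m hm hA hcol hp
    obtain ⟨q, hq, A', hA', hqA', hcard, hind⟩ :=
      good_point v A t m ht (by omega) hA hcol hp
    obtain ⟨c, hc⟩ := hcol
    have hvq : v q ≠ 0 := (hc (c q)).ne_zero (i := q) (by simp [hq])
    have hex : ∀ s : Fin t, ∃ I' ⊆ A'.filter (fun a => c a = s),
        (A'.filter (fun a => c a = s)).card ≤ I'.card + 1 ∧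
        LinearIndepOn ℝ ((Submodule.span ℝ {v q}).mkQ ∘ v) (I' : Set ι) := by
      intro s
      apply exists_quotient_indep v _ _ q hvq
      apply (hc s).mono
      exact_mod_cast Finset.filter_subset_filter _ hA'
    choose I hIsub hIcard hIind using hex
    let A2 := A'.filter (fun a => a ∈ I (c a))
    have hfib : ∀ s, A2.filter (fun a => c a = s) = I s := by
      intro s
      ext a
      simp only [A2, Finset.mem_filter]
      constructor
      · rintro ⟨⟨-, h⟩, rfl⟩; exact h
      · intro h
        have := hIsub s h
        rw [Finset.mem_filter] at this
        obtain ⟨h1, rfl⟩ := this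
        exact ⟨⟨h1, h⟩, rfl⟩
    have hA2card : A'.card ≤ A2.card + t := by
      rw [Finset.card_eq_sum_card_fiberwise (f := c) (s := A') (t := Finset.univ)
        (fun _ _ => Finset.mem_coe.2 (Finset.mem_univ _)),
        Finset.card_eq_sum_card_fiberwise (f := c) (s := A2) (t := Finset.univ)
        (fun _ _ => Finset.mem_coe.2 (Finset.mem_univ _))]
      calc ∑ s, (A'.filter (fun a => c a = s)).card ≤ ∑ s, ((I s).card + 1) :=
            Finset.sum_le_sum (fun s _ => hIcard s)
        _ = _ := by
            rw [Finset.sum_add_distrib]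
            simp [hfib]
    obtain ⟨k, rfl⟩ : ∃ k, m = k + 3 := ⟨m - 3, by omega⟩
    obtain ⟨A3, hA3, hA3card⟩ := Finset.exists_subset_card_eq (s := A2) (n := t * k) (by
      rw [hA] at hcard
      nlinarith)
    have hA3' : A3 ⊆ A' := hA3.trans (Finset.filter_subset _ _)
    obtain ⟨Q, hQ, A4, hA4, hdis, hQcard, hA4card, hQind⟩ :=
      ih (V ⧸ Submodule.span ℝ {v q}) ((Submodule.span ℝ {v q}).mkQ ∘ v) A3 k (by omega) hA3card
        ⟨c, fun s => (hIind s).mono (by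
          rw [← hfib s]
          exact_mod_cast Finset.filter_subset_filter _ hA3)⟩
        (fun a ha b hb _ => hind a (hA3' ha) b (hA3' hb))
    have hqQ : q ∉ Q := fun h => hqA' (hA3' (hQ h))
    have hqA4 : q ∉ A4 := fun h => hqA' (hA3' (hA4 h))
    refine ⟨insert q Q, ?_, A4, (hA4.trans hA3').trans hA', ?_, ?_, ?_, ?_⟩
    · exact Finset.insert_subset hq ((hQ.trans hA3').trans hA')
    · rw [Finset.disjoint_insert_left]
      exact ⟨hqA4, hdis⟩
    · rw [Finset.card_insert_of_notMem hqQ, hQcard]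
    · have : k + 3 + 1 - 3 * (r + 1 + 1) = k + 1 - 3 * (r + 1) := by omega
      rw [this]; exact hA4card
    · intro a ha b hb
      have h1 := hQind a ha b hb
      have h2 : ((insert q Q : Finset ι) : Set ι) ∪ {a, b} = {q} ∪ ((Q : Set ι) ∪ {a, b}) := by
        rw [Finset.coe_insert, Set.insert_union, Set.singleton_union]
      rw [h2]
      apply LinearIndepOn.union_of_quotient (LinearIndepOn.singleton hvq)
      rw [Set.image_singleton]
      exact h1

lemma span_homog {d : ℕ} (P : Set (Fin d → ℝ)) (hspan : affineSpan ℝ P = ⊤) :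
    Submodule.span ℝ (homog '' P) = ⊤ := by
  have h1 : ∀ x : Fin d → ℝ, homog x ∈ Submodule.span ℝ (homog '' P) := by
    intro x
    have hx : x ∈ affineSpan ℝ P := by rw [hspan]; trivial
    refine affineSpan_induction hx (fun y hy => Submodule.subset_span ⟨y, hy, rfl⟩) ?_
    intro c u v w hu hv hw
    have e : homog (c • (u -ᵥ v) +ᵥ w) = c • (homog u - homog v) + homog w := by
      simp [homog]
    rw [e]
    exact add_mem (Submodule.smul_mem _ _ (sub_mem hu hv)) hw
  rw [eq_top_iff]
  rintro ⟨x, s⟩ -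
  have e : ((x, s) : (Fin d → ℝ) × ℝ) = homog x + (s - 1) • homog 0 := by
    simp [homog]
  rw [e]
  exact add_mem (h1 x) (Submodule.smul_mem _ _ (h1 0))

lemma homog_ne_zero {d : ℕ} (x : Fin d → ℝ) : homog x ≠ 0 := by
  intro h
  have := congrArg Prod.snd h
  simp [homog] at this

lemma homog_pair {d : ℕ} (a b : Fin d → ℝ) :
    LinearIndepOn ℝ homog ({a, b} : Set (Fin d → ℝ)) := by
  by_cases hab : a = b
  · subst hab
    simpa using homog_ne_zero a
  rw [LinearIndepOn.pair_iff _ hab]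
  intro c e h
  have h1 : c • a + e • b = 0 := by simpa [homog] using congrArg Prod.fst h
  have h2 : c + e = 0 := by simpa [homog] using congrArg Prod.snd h
  have h3 : e = -c := by linarith
  have h4 : c • (a - b) = 0 := by
    rw [← h1, h3]; module
  rcases smul_eq_zero.1 h4 with h | h
  · exact ⟨h, by rw [h3, h]; simp⟩
  · exact absurd (sub_eq_zero.1 h) hab

section Main

set_option linter.unusedSectionVars false

variable {ι : Type*} [DecidableEq ι] {V : Type*} [AddCommGroup V] [Module ℝ V]

lemma exists_basis_subset (v : ι → V) (P : Finset ι) (I : Finset ι) (hIP : I ⊆ P)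
    (hI : LinearIndepOn ℝ v (I : Set ι)) :
    ∃ J ⊆ P, I ⊆ J ∧ (∀ x ∈ P, v x ∈ Submodule.span ℝ (v '' (J : Set ι))) ∧
      LinearIndepOn ℝ v (J : Set ι) := by
  obtain ⟨b, hb, hIb, hspan, hbi⟩ := exists_linearIndepOn_extension (K := ℝ) (v := v)
    (s := (I : Set ι)) (t := (P : Set ι)) hI (by exact_mod_cast hIP)
  have hfin : b.Finite := P.finite_toSet.subset hb
  lift b to Finset ι using hfin
  exact ⟨b, by exact_mod_cast hb, by exact_mod_cast hIb, fun x hx => hspan ⟨x, hx, rfl⟩, hbi⟩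

lemma card_basis (v : ι → V) (P J : Finset ι)
    (hspan : Submodule.span ℝ (v '' (P : Set ι)) = ⊤)
    (hJs : ∀ x ∈ P, v x ∈ Submodule.span ℝ (v '' (J : Set ι)))
    (hJ : LinearIndepOn ℝ v (J : Set ι)) : J.card = Module.finrank ℝ V := by
  rw [← finrank_span_of_indepOn hJ]
  have : Submodule.span ℝ (v '' (J : Set ι)) = ⊤ := by
    rw [eq_top_iff, ← hspan, Submodule.span_le]
    rintro _ ⟨x, hx, rfl⟩
    exact hJs x hx
  rw [this, finrank_top]

lemma exists_max_packing (v : ι → V) (P : Finset ι) (m : ℕ) (hm : 1 ≤ m)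
    (hspan : Submodule.span ℝ (v '' (P : Set ι)) = ⊤) (hmD : m ≤ Module.finrank ℝ V) :
    ∃ t, 1 ≤ t ∧ ∃ A ⊆ P, A.card = t * m ∧ (∃ c : ι → Fin t, IndepColoring v A t c) ∧
      ∀ I ⊆ P \ A, LinearIndepOn ℝ v (I : Set ι) → I.card < m := by
  classical
  let p : ℕ → Prop := fun t => ∃ A ⊆ P, A.card = t * m ∧ ∃ c : ι → Fin t, IndepColoring v A t c
  have hbound : ∀ t, p t → t ≤ P.card := by
    rintro t ⟨A, hA, hAc, -⟩
    have := Finset.card_le_card hA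
    nlinarith
  have hp1 : p 1 := by
    obtain ⟨J, hJP, -, hJs, hJ⟩ := exists_basis_subset v P ∅ (by simp) (by simp)
    have hJc := card_basis v P J hspan hJs hJ
    obtain ⟨A, hAJ, hAc⟩ := Finset.exists_subset_card_eq (s := J) (n := m) (by omega)
    refine ⟨A, hAJ.trans hJP, by omega, fun _ => 0, fun s => hJ.mono ?_⟩
    exact_mod_cast (Finset.filter_subset _ _).trans hAJ
  let t := Nat.findGreatest p P.card
  have hpt : p t := Nat.findGreatest_spec (hbound 1 hp1) hp1
  have ht1 : 1 ≤ t := Nat.le_findGreatest (hbound 1 hp1) hp1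
  obtain ⟨A, hA, hAc, c, hc⟩ := hpt
  refine ⟨t, ht1, A, hA, hAc, ⟨c, hc⟩, ?_⟩
  intro I hI hIi
  by_contra! hcon
  obtain ⟨I', hI', hI'c⟩ := Finset.exists_subset_card_eq hcon
  have hdis : Disjoint A I' := by
    rw [Finset.disjoint_left]
    intro x hx hx'
    exact (Finset.mem_sdiff.1 (hI (hI' hx'))).2 hx
  have hpt' : p (t + 1) := by
    refine ⟨A ∪ I', ?_, ?_, fun a => if a ∈ I' then Fin.last t else (c a).castSucc, ?_⟩
    · apply Finset.union_subset hA
      intro x hx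
      exact (Finset.mem_sdiff.1 (hI (hI' hx))).1
    · rw [Finset.card_union_of_disjoint hdis, hAc, hI'c]; ring
    · intro s
      induction s using Fin.lastCases with
      | last =>
        apply hIi.mono
        intro x hx
        rw [Finset.mem_coe, Finset.mem_filter] at hx
        beta_reduce at hx
        by_cases h : x ∈ I'
        · exact_mod_cast hI' h
        · rw [if_neg h] at hx
          exact absurd hx.2 (Fin.castSucc_lt_last _).ne
      | cast s =>
        apply (hc s).mono
        intro x hx
        rw [Finset.mem_coe, Finset.mem_filter] at hx
        beta_reduce at hx
        rw [Finset.mem_coe, Finset.mem_filter]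
        by_cases h : x ∈ I'
        · rw [if_pos h] at hx
          exact absurd hx.2.symm (Fin.castSucc_lt_last _).ne
        · rw [if_neg h] at hx
          refine ⟨?_, Fin.castSucc_injective _ hx.2⟩
          rcases Finset.mem_union.1 hx.1 with h' | h'
          · exact h'
          · exact absurd h' h
  have := Nat.le_findGreatest (hbound _ hpt') hpt'
  change t + 1 ≤ t at this
  omega

lemma exists_remainder_star (v : ι → V) (P R : Finset ι) (m : ℕ) (hRP : R ⊆ P)
    (hspan : Submodule.span ℝ (v '' (P : Set ι)) = ⊤)
    (hp : ∀ a b, LinearIndepOn ℝ v ({a, b} : Set ι))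
    (hR : ∀ I ⊆ R, LinearIndepOn ℝ v (I : Set ι) → I.card < m) :
    ∃ Q ⊆ P, Disjoint Q R ∧ Module.finrank ℝ V + 1 ≤ Q.card + m ∧
      ∀ a ∈ R, ∀ b ∈ R, LinearIndepOn ℝ v ((Q : Set ι) ∪ {a, b}) := by
  obtain ⟨I, hIR, -, hIs, hI⟩ := exists_basis_subset v R ∅ (by simp) (by simp)
  obtain ⟨J, hJP, hIJ, hJs, hJ⟩ := exists_basis_subset v P I (hIR.trans hRP) hI
  have hJc := card_basis v P J hspan hJs hJ
  have hIc := hR I hIR hI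
  have hd : Disjoint (Submodule.span ℝ (v '' ((J \ I : Finset ι) : Set ι)))
      (Submodule.span ℝ (v '' (I : Set ι))) := by
    have h1 : ((J : Finset ι) : Set ι) = ((J \ I : Finset ι) : Set ι) ∪ (I : Set ι) := by
      rw [← Finset.coe_union, Finset.sdiff_union_of_subset hIJ]
    rw [h1, linearIndepOn_union_iff (by exact_mod_cast Finset.sdiff_disjoint)] at hJ
    exact hJ.2.2
  have hQi : LinearIndepOn ℝ v ((J \ I : Finset ι) : Set ι) :=
    hJ.mono (by exact_mod_cast Finset.sdiff_subset)
  refine ⟨J \ I, Finset.sdiff_subset.trans hJP, ?_, ?_, ?_⟩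
  · rw [Finset.disjoint_left]
    intro x hx hxR
    have h1 := Submodule.disjoint_def.1 hd (v x) (Submodule.subset_span ⟨x, hx, rfl⟩) (hIs x hxR)
    exact hQi.ne_zero (i := x) hx h1
  · rw [Finset.card_sdiff_of_subset hIJ]
    omega
  · intro a ha b hb
    apply hQi.union (hp a b)
    refine hd.mono_right ?_
    rw [Submodule.span_le, Set.image_pair]
    rintro x (rfl | rfl)
    · exact hIs a ha
    · exact hIs b hb

end Main

lemma main_numeric {d n : ℕ} (P : Finset (Fin d → ℝ)) (hcard : P.card = n)
    (hspan : affineSpan ℝ (P : Set (Fin d → ℝ)) = ⊤) (m r : ℕ) (hr : 3 * (r + 1) ≤ m)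
    (hm : m ≤ d + 1) (h1 : d + 2 * m ≤ 2 * (d + 2))
    (h2 : d * m ≤ 46 * ((r + 1) * (m + 1 - 3 * (r + 1)))) :
    ∃ Q ⊆ P, ∃ A ⊆ P, Disjoint Q A ∧ d * n ≤ 48 * (Q.card * A.card) ∧
      ∀ a ∈ A, ∀ b ∈ A, LinearIndepOn ℝ homog ((Q : Set (Fin d → ℝ)) ∪ {a, b}) := by
  classical
  have hsp := span_homog _ hspan
  have hfr : Module.finrank ℝ ((Fin d → ℝ) × ℝ) = d + 1 := by simp
  obtain ⟨t, ht, A, hA, hAc, hcol, hmax⟩ :=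
    exists_max_packing homog P m (by omega) hsp (by omega)
  by_cases hcase : n ≤ 24 * (P \ A).card
  · obtain ⟨Q, hQP, hdis, hQc, hind⟩ := exists_remainder_star homog P (P \ A) m
      Finset.sdiff_subset hsp homog_pair hmax
    refine ⟨Q, hQP, P \ A, Finset.sdiff_subset, hdis, ?_, hind⟩
    rw [hfr] at hQc
    calc d * n ≤ (2 * Q.card) * (24 * (P \ A).card) := Nat.mul_le_mul (by omega) hcase
      _ = _ := by ring
  · obtain ⟨Q, hQA, A', hA', hdis, hQc, hA'c, hind⟩ := star_recursion t ht r _ homog A m hr hAc hcol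
      (fun a _ b _ _ => homog_pair a b)
    refine ⟨Q, hQA.trans hA, A', hA'.trans hA, hdis, ?_, hind⟩
    have hR : (P \ A).card + t * m = n := by
      rw [← hAc, ← hcard, Finset.card_sdiff_add_card_eq_card hA]
    have h3 : 23 * n ≤ 24 * (t * m) := by omega
    rw [hQc]
    generalize m + 1 - 3 * (r + 1) = w at *
    have h4 : 23 * (d * n) ≤ 23 * (48 * ((r + 1) * (t * w))) := by
      calc 23 * (d * n) = d * (23 * n) := by ring
        _ ≤ d * (24 * (t * m)) := Nat.mul_le_mul_left _ h3
        _ = 24 * t * (d * m) := by ring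
        _ ≤ 24 * t * (46 * ((r + 1) * w)) := Nat.mul_le_mul_left _ h2
        _ = _ := by ring
    have h5 : (r + 1) * (t * w) ≤ (r + 1) * A'.card := Nat.mul_le_mul_left _ (by omega)
    omega

lemma numeric_choice (m d : ℕ) (hm : 3 ≤ m) (hd : d + 2 ≤ 2 * m) :
    d * m ≤ 46 * (((m - 1) / 6 + 1) * (m + 1 - 3 * ((m - 1) / 6 + 1))) := by
  obtain ⟨k, i, hi, hk⟩ : ∃ k i, i < 6 ∧ m = 6 * k + i + 1 :=
    ⟨(m - 1) / 6, (m - 1) % 6, by omega, by omega⟩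
  have hk' : (m - 1) / 6 = k := by omega
  have hw : m + 1 - 3 * (k + 1) = m - 2 - 3 * k := by omega
  rw [hk', hw]
  obtain ⟨w, hw⟩ : ∃ w, m = w + 2 + 3 * k := ⟨m - 2 - 3 * k, by omega⟩
  have e : m - 2 - 3 * k = w := by omega
  rw [e]
  have hwk : w + 1 = 3 * k + i := by omega
  have hdm : d * m ≤ (2 * (w + 1 + 3 * k)) * (w + 2 + 3 * k) := by
    apply Nat.mul_le_mul <;> omega
  refine hdm.trans ?_
  rcases Nat.eq_zero_or_pos k with rfl | hk0
  · have : 1 ≤ w := by omega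
    have : w ≤ 4 := by omega
    interval_cases w <;> omega
  · zify at *
    nlinarith [mul_nonneg (show (0:ℤ) ≤ k by omega) (show (0:ℤ) ≤ i by omega)]

/-- **Theorem 1.3.** For every integer `d ≥ 2`, any finite set `P` of `n` points in
`ℝ^d` whose affine span is all of `ℝ^d` determines at least `(1/48)·d·n` closed
line segments (with endpoints in `P`), no two of which are convergent and no two
of which are collinear. -/
theorem segments_no_two_convergent_or_collinear (d n : ℕ) (hd : 2 ≤ d)
    (P : Finset (Fin d → ℝ)) (hcard : P.card = n)
    (hspan : affineSpan ℝ (P : Set (Fin d → ℝ)) = ⊤) :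
    ∃ S : Finset ((Fin d → ℝ) × (Fin d → ℝ)),
      d * n ≤ 48 * S.card ∧
      (∀ e ∈ S, e.1 ∈ P ∧ e.2 ∈ P ∧ e.1 ≠ e.2) ∧
      (∀ e₁ ∈ S, ∀ e₂ ∈ S, e₁ ≠ e₂ →
        ¬ Convergent (segment ℝ e₁.1 e₁.2) (segment ℝ e₂.1 e₂.2) ∧
        ¬ Collinear ℝ (segment ℝ e₁.1 e₁.2 ∪ segment ℝ e₂.1 e₂.2)) := by
  have key : ∃ Q ⊆ P, ∃ A ⊆ P, Disjoint Q A ∧ d * n ≤ 48 * (Q.card * A.card) ∧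
      ∀ a ∈ A, ∀ b ∈ A, LinearIndepOn ℝ homog ((Q : Set (Fin d → ℝ)) ∪ {a, b}) := by
    rcases Nat.lt_or_ge d 3 with h | h
    · have h2 : d = 2 := by omega
      subst h2
      exact main_numeric P hcard hspan 3 0 (by norm_num) (by norm_num) (by norm_num) (by norm_num)
    · have hm : 3 ≤ (d + 1) / 2 + 1 := by omega
      exact main_numeric P hcard hspan ((d + 1) / 2 + 1) (((d + 1) / 2 + 1 - 1) / 6) (by omega)
        (by omega) (by omega) (numeric_choice _ d hm (by omega))
  obtain ⟨Q, hQ, A, hA, hdis, hc, hind⟩ := key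
  refine ⟨Q ×ˢ A, by rwa [Finset.card_product], ?_, star_segments Q A hdis hind⟩
  rintro ⟨q, a⟩ he
  rw [Finset.mem_product] at he
  refine ⟨hQ he.1, hA he.2, ?_⟩
  rintro h
  simp only at h he
  exact Finset.disjoint_left.1 hdis he.1 (h ▸ he.2)
end
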